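/- arXiv:math/0407344 — 2 statements merged into one kernel-verified Lean document; each statement's English description precedes it below -/
import Mathlib

section
/- Let C = {z₀, …, z_{p−1}} ⊂ 𝕋 be a cycle of length p for z ↦ zᴺ, and let E = (−N^p, −1] ∪ [1, N^p). Then the map Ψ : L²(ℝ)^p → L²(E, ℓ²(ℤ)) defined by Ψ(f)(x, m) = N^{−m/2} f(N^{−m}x, (−m) mod p) is a unitary isomorphism that intertwines the representation 𝔯_C (in its Fourier-transformed form) with the direct integral ∫_E^⊕ π_{z_C·î(x)} dx; that is, 𝔯_C is unitarily equivalent to the direct integral over x ∈ E of the irreducible representations π_{z_C·î(x)} on ℓ²(ℤ) given by (Uξ)(k) = ξ(k−1) and (Tξ)(k) = z_{(−k) mod p}·e^{−2πi N^{−k} x}·ξ(k). -/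
noncomputable section

open MeasureTheory Real Complex Filter Finset
open scoped ENNReal

/-! ### Basic instances for the circle -/

instance : MeasurableSpace Circle := borel Circle
instance : BorelSpace Circle := ⟨rfl⟩

/-- The point `e^{-2πit}` of the unit circle. -/
def ee (t : ℝ) : Circle := Circle.exp (-(2 * π * t))

/-- Normalized Lebesgue measure on the circle, realized as the image of Lebesgue
measure on `[0,1)` under `t ↦ e^{-2πit}`. -/
def circleMeasure : Measure Circle := (volume.restrict (Set.Ico (0:ℝ) 1)).map ee

/-! ### The Baumslag–Solitar group `BS(1,N)` -/

/-- The single relation `u t u⁻¹ (t^N)⁻¹` defining `BS(1,N)`. -/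
def BSRel (N : ℕ) : Set (FreeGroup Bool) :=
  {FreeGroup.of true * FreeGroup.of false * (FreeGroup.of true)⁻¹ * ((FreeGroup.of false) ^ N)⁻¹}

/-- The Baumslag–Solitar group `BS(1,N) = ⟨u,t | u t u⁻¹ = t^N⟩`. -/
abbrev BS (N : ℕ) := PresentedGroup (BSRel N)

/-- The generator `u` of `BS(1,N)`. -/
def BS.u (N : ℕ) : BS N := PresentedGroup.of true

/-- The generator `t` of `BS(1,N)`. -/
def BS.t (N : ℕ) : BS N := PresentedGroup.of false

/-! ### The solenoid -/

/-- The `N`-solenoid, as a subgroup of the product of circles indexed by `ℤ`: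
all sequences `(z_n)` with `z_{n+1}^N = z_n`. -/
def solenoidGroup (N : ℕ) : Subgroup (ℤ → Circle) where
  carrier := {z | ∀ n : ℤ, z (n + 1) ^ N = z n}
  one_mem' := by intro n; simp
  mul_mem' := by
    intro a b ha hb n
    simp only [Set.mem_setOf_eq, Pi.mul_apply, mul_pow] at *
    rw [ha n, hb n]
  inv_mem' := by
    intro a ha n
    simp only [Set.mem_setOf_eq, Pi.inv_apply, inv_pow] at *
    rw [ha n]

/-- The `N`-solenoid as a type. -/
abbrev Solenoid (N : ℕ) := ↥(solenoidGroup N)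

/-- The shift `S` on the solenoid: `(S z)_n = z_{n-1}`. -/
def shift (N : ℕ) (z : Solenoid N) : Solenoid N :=
  ⟨fun n => z.val (n - 1), by
    intro n
    have h := z.property (n - 1)
    simpa using h⟩

/-- The inverse `S⁻¹` of the shift on the solenoid: `(S⁻¹ z)_n = z_{n+1}`. -/
def shiftInv (N : ℕ) (z : Solenoid N) : Solenoid N :=
  ⟨fun n => z.val (n + 1), fun n => z.property (n + 1)⟩

/-- Integer powers `Sⁿ` of the shift. -/
def shiftZ (N : ℕ) (n : ℤ) : Solenoid N → Solenoid N :=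
  if 0 ≤ n then (shift N)^[n.toNat] else (shiftInv N)^[(-n).toNat]

/-- The measure `ν ∘ S`, defined by `(ν ∘ S)(E) = ν(S(E))`. -/
def measShift (N : ℕ) (ν : Measure (Solenoid N)) : Measure (Solenoid N) :=
  ν.map (shiftInv N)

/-- `ν` is quasi-invariant for the shift `S`: `ν ∘ S` and `ν` are mutually
absolutely continuous. -/
def QuasiInvariant (N : ℕ) (ν : Measure (Solenoid N)) : Prop :=
  measShift N ν ≪ ν ∧ ν ≪ measShift N ν

/-- The shift `S` is ergodic with respect to `ν`. -/
def ShiftErgodic (N : ℕ) (ν : Measure (Solenoid N)) : Prop :=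
  ∀ E : Set (Solenoid N), MeasurableSet E → shift N ⁻¹' E = E → ν E = 0 ∨ ν Eᶜ = 0

/-- A bounded measurable (`L^∞`-type) function. -/
def BddMeasurable {α : Type*} [MeasurableSpace α] (f : α → ℂ) : Prop :=
  Measurable f ∧ ∃ C : ℝ, ∀ x, ‖f x‖ ≤ C

/-! ### The representation `π_{ν,θ}` -/

/-- The pair of unitaries `U, T` on `L²(ν)` given by
`Uξ = √Δ ⬝ θ ⬝ (ξ∘S)` (with `Δ = d(ν∘S)/dν`) and `(Tξ)(z) = z₀ ξ(z)`. -/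
def IsPiNuTheta (N : ℕ) (ν : Measure (Solenoid N)) (θ : Solenoid N → Circle)
    (U T : unitary (Lp ℂ 2 ν →L[ℂ] Lp ℂ 2 ν)) : Prop :=
  (∀ ξ : Lp ℂ 2 ν,
      (((U : Lp ℂ 2 ν →L[ℂ] Lp ℂ 2 ν) ξ : Lp ℂ 2 ν) : Solenoid N → ℂ) =ᵐ[ν]
        fun z => (Real.sqrt (((measShift N ν).rnDeriv ν z).toReal) : ℂ) * (θ z : ℂ) *
          (ξ : Solenoid N → ℂ) (shift N z)) ∧
  (∀ ξ : Lp ℂ 2 ν,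
      (((T : Lp ℂ 2 ν →L[ℂ] Lp ℂ 2 ν) ξ : Lp ℂ 2 ν) : Solenoid N → ℂ) =ᵐ[ν]
        fun z => ((z.val 0 : Circle) : ℂ) * (ξ : Solenoid N → ℂ) z)

/-- `φ` is a cyclic vector for the (unitary) representation generated by `U` and `T`:
the only closed subspace containing `φ` and invariant under the group generated by
`U` and `T` is the whole space. -/
def cyclicVector {H : Type*} [NormedAddCommGroup H] [InnerProductSpace ℂ H]
    [CompleteSpace H] (U T : unitary (H →L[ℂ] H)) (φ : H) : Prop :=
  ∀ K : Submodule ℂ H, IsClosed (K : Set H) → φ ∈ K →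
    (∀ g ∈ Subgroup.closure ({U, T} : Set (unitary (H →L[ℂ] H))),
      ∀ v ∈ K, (g : H →L[ℂ] H) v ∈ K) → K = ⊤

/-! ### Filters and the Ruelle operator -/

/-- The quadrature mirror filter condition `R_{m₀} 1 = 1`, written out on `[0,1)`:
`(1/N) ∑_{k<N} |m₀(e^{-2πi(x+k)/N})|² = 1` for a.e. `x`. -/
def QMF (N : ℕ) (m₀ : Circle → ℂ) : Prop :=
  ∀ᵐ x ∂(volume.restrict (Set.Ico (0:ℝ) 1)),
    (1 / N : ℝ) * ∑ k ∈ Finset.range N, ‖m₀ (ee ((x + k) / N))‖ ^ 2 = 1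

/-- `h` is a fixed point of the Ruelle operator `R_{m₀}`:
`(1/N) ∑_{w^N = z} |m₀(w)|² h(w) = h(z)` for a.e. `z`, written out on `[0,1)`. -/
def RuelleFixed (N : ℕ) (m₀ : Circle → ℂ) (h : Circle → ℂ) : Prop :=
  ∀ᵐ x ∂(volume.restrict (Set.Ico (0:ℝ) 1)),
    (1 / N : ℂ) * ∑ k ∈ Finset.range N,
        (‖m₀ (ee ((x + k) / N))‖ ^ 2 : ℝ) * h (ee ((x + k) / N)) = h (ee x)

/-- The wavelet representation of `BS(1,N)` associated to a filter `m₀`, realized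
on `L²(m)` for a measure `m` on the solenoid: `Uξ = m₀ ⬝ (ξ∘S)` and `T` is
multiplication by the coordinate `z₀`. -/
def IsWaveletRepOn (N : ℕ) (m₀ : Circle → ℂ) (m : Measure (Solenoid N))
    (U T : unitary (Lp ℂ 2 m →L[ℂ] Lp ℂ 2 m)) : Prop :=
  (∀ ξ : Lp ℂ 2 m,
      (((U : Lp ℂ 2 m →L[ℂ] Lp ℂ 2 m) ξ : Lp ℂ 2 m) : Solenoid N → ℂ) =ᵐ[m]
        fun z => m₀ (z.val 0) * (ξ : Solenoid N → ℂ) (shift N z)) ∧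
  (∀ ξ : Lp ℂ 2 m,
      (((T : Lp ℂ 2 m →L[ℂ] Lp ℂ 2 m) ξ : Lp ℂ 2 m) : Solenoid N → ℂ) =ᵐ[m]
        fun z => ((z.val 0 : Circle) : ℂ) * (ξ : Solenoid N → ℂ) z)

/-- The measure `m` on the solenoid associated to a weight `W` (with `N W = |m₀|²`):
its `z₀`-marginal is normalized Lebesgue measure on the circle, and
`d(m∘S)/dm = N W`. -/
def IsAssociatedMeasure (N : ℕ) (W : Circle → ℝ) (m : Measure (Solenoid N)) : Prop :=
  IsProbabilityMeasure m ∧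
  m.map (fun z : Solenoid N => z.val 0) = circleMeasure ∧
  measShift N m = m.withDensity (fun z => ENNReal.ofReal (N * W (z.val 0)))

end
noncomputable section

open MeasureTheory Real Complex Filter Finset

/-- `(m mod p)` as an element of `Fin p`. -/
def modFin (p : ℕ) [NeZero p] (m : ℤ) : Fin p :=
  ⟨(m % (p : ℤ)).toNat, by
    have hp : 0 < p := Nat.pos_of_ne_zero (NeZero.ne p)
    have h1 : 0 ≤ m % (p : ℤ) := Int.emod_nonneg m (by exact_mod_cast hp.ne')
    have h2 : m % (p : ℤ) < (p : ℤ) := Int.emod_lt_of_pos m (by exact_mod_cast hp)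
    omega⟩

/-- The measure (Lebesgue × counting) on `ℝ × {0,…,p−1}`, so that
`L²` of it is `L²(ℝ)^p`. -/
def prodMeas (p : ℕ) : Measure (ℝ × Fin p) :=
  (volume : Measure ℝ).prod (Measure.count : Measure (Fin p))

/-- The set `E = (−N^p, −1] ∪ [1, N^p)`. -/
def ESet (N p : ℕ) : Set ℝ :=
  Set.Ioc (-((N : ℝ) ^ p)) (-1) ∪ Set.Ico (1 : ℝ) ((N : ℝ) ^ p)

/-- `ℓ²(ℤ)`. -/
abbrev ellTwo : Type := lp (fun _ : ℤ => ℂ) 2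

/-- The pair of unitaries giving (the Fourier-transformed form of) the
representation `𝔯_C` of `BS(1,N)` on `L²(ℝ)^p` attached to a cycle
`C = {z_0, …, z_{p−1}}`:
`(Ûf)(x,i) = √N f(Nx, i+1)`, `(T̂f)(x,i) = z_i e^{−2πix} f(x,i)`. -/
def IsCycleRep (N p : ℕ) [NeZero p] (zc : Fin p → Circle)
    (U T : unitary (Lp ℂ 2 (prodMeas p) →L[ℂ] Lp ℂ 2 (prodMeas p))) : Prop :=
  (∀ f : Lp ℂ 2 (prodMeas p),
    (((U : Lp ℂ 2 (prodMeas p) →L[ℂ] Lp ℂ 2 (prodMeas p)) f : Lp ℂ 2 (prodMeas p))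
        : ℝ × Fin p → ℂ) =ᵐ[prodMeas p]
      fun q => (Real.sqrt N : ℂ) * (f : ℝ × Fin p → ℂ) (N * q.1, q.2 + 1)) ∧
  (∀ f : Lp ℂ 2 (prodMeas p),
    (((T : Lp ℂ 2 (prodMeas p) →L[ℂ] Lp ℂ 2 (prodMeas p)) f : Lp ℂ 2 (prodMeas p))
        : ℝ × Fin p → ℂ) =ᵐ[prodMeas p]
      fun q => ((zc q.2 : Circle) : ℂ) * ((ee q.1 : Circle) : ℂ) * (f : ℝ × Fin p → ℂ) q)


/-!
Currying identifies `L²(E; ℓ²(ℤ))` with `L²(E × ℤ)`. The dilates of `E` by powers of `N^p` tile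
`ℝ \ {0}`, so for `y ≠ 0` and `i < p` exactly one `k ≡ -i mod p` has `N^k y ∈ E`; hence
`(x, k) ↦ (N^{-k} x, -k mod p)` is almost everywhere a bijection from `E × ℤ` onto
`ℝ × {0, …, p - 1}`, and composing with it is unitary after weighting by the square root of the
Jacobian `N^{-k}`. Under this map `k ↦ k - 1` becomes `(y, i) ↦ (N y, i + 1)`, and a
multiplication operator becomes a multiplication operator; these are the intertwining relations.

The fiber at `x` is generated by the shift of `ℓ²(ℤ)` and the diagonal operator with symbol
`w = z_C · î(x)`. A matrix commuting with the shift is constant along diagonals, and commuting with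
the diagonal operator forces its entries off the main diagonal to vanish unless `w` is periodic, so
the commutant is scalar and the fiber irreducible. Finally, a period `d` of `w` gives the period
`d p` of `k ↦ e^{-2πi N^{-k} x}`, that is `e^{-2πi N^{-m} y} = 1` for all `m` with
`y = N^{-dp} x - x`; as `N^{-m} y → 0`, this forces `y = 0` and `d = 0`.
-/

open scoped ENNReal

section ProdCount

variable {X ι : Type*} [MeasurableSpace X] [MeasurableSpace ι] [Countable ι]

lemma prod_count_eq_sum_map (μ : Measure X) [SFinite μ] :
    μ.prod (Measure.count : Measure ι) = Measure.sum fun k => μ.map fun x => (x, k) := by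
  simp_rw [Measure.count, Measure.prod_sum_right, Measure.prod_dirac]

variable [MeasurableSingletonClass ι] {μ : Measure X} [SFinite μ]

lemma lintegral_prod_count (g : X × ι → ℝ≥0∞) :
    ∫⁻ z, g z ∂μ.prod Measure.count = ∑' k, ∫⁻ x, g (x, k) ∂μ := by
  rw [prod_count_eq_sum_map, lintegral_sum_measure]
  exact tsum_congr fun k => (measurableEmbedding_prod_mk_right k).lintegral_map g

lemma ae_prod_count_iff {P : X × ι → Prop} :
    (∀ᵐ z ∂μ.prod Measure.count, P z) ↔ ∀ᵐ x ∂μ, ∀ k, P (x, k) := by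
  rw [prod_count_eq_sum_map, Measure.ae_sum_iff, ae_all_iff]
  exact forall_congr' fun k => (measurableEmbedding_prod_mk_right k).ae_map_iff

lemma aestronglyMeasurable_prod_count_iff {E : Type*} [TopologicalSpace E]
    [TopologicalSpace.PseudoMetrizableSpace E] {f : X × ι → E} :
    AEStronglyMeasurable f (μ.prod Measure.count) ↔
      ∀ k, AEStronglyMeasurable (fun x => f (x, k)) μ := by
  rw [prod_count_eq_sum_map, aestronglyMeasurable_sum_measure_iff]
  exact forall_congr' fun k => (measurableEmbedding_prod_mk_right k).aestronglyMeasurable_map_iff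

end ProdCount

section SequenceSpace

variable {X ι E : Type*} [NormedAddCommGroup E] {q : ℝ≥0∞}

lemma enorm_rpow_eq_ofReal {r : ℝ} (hr : 0 ≤ r) (v : E) :
    ‖v‖ₑ ^ r = ENNReal.ofReal (‖v‖ ^ r) := by
  rw [← ENNReal.ofReal_rpow_of_nonneg (norm_nonneg v) hr, ofReal_norm]

lemma memℓp_of_tsum_enorm_ne_top (hq : 0 < q.toReal) {a : ι → E}
    (ha : ∑' k, ‖a k‖ₑ ^ q.toReal ≠ ⊤) : Memℓp a q := by
  rw [memℓp_gen_iff hq]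
  simpa only [← ENNReal.toReal_rpow, toReal_enorm] using ENNReal.summable_toReal ha

lemma exists_lp_valued_of_memℓp (f : X × ι → E) :
    ∃ F : X → lp (fun _ : ι => E) q,
      ∀ x, Memℓp (fun k => f (x, k)) q → ∀ k, F x k = f (x, k) := by
  classical
  refine ⟨fun x => if h : Memℓp (fun k => f (x, k)) q then ⟨_, h⟩ else 0, fun x h k => ?_⟩
  exact congrArg (fun ξ : lp (fun _ : ι => E) q => ξ k) (dif_pos h)

variable [Fact (1 ≤ q)]

lemma toReal_pos_of_one_le (hq : q ≠ ⊤) : 0 < q.toReal :=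
  ENNReal.toReal_pos (one_pos.trans_le Fact.out).ne' hq

lemma enorm_rpow_eq_tsum_enorm (hq : 0 < q.toReal) (ξ : lp (fun _ : ι => E) q) :
    ‖ξ‖ₑ ^ q.toReal = ∑' k, ‖ξ k‖ₑ ^ q.toReal := by
  rw [enorm_rpow_eq_ofReal hq.le, lp.norm_rpow_eq_tsum hq,
    ENNReal.ofReal_tsum_of_nonneg (fun _ => by positivity) (lp.hasSum_norm hq ξ).summable]
  exact tsum_congr fun k => (enorm_rpow_eq_ofReal hq.le (ξ k)).symm

variable [MeasurableSpace X] {μ : Measure X}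

lemma aestronglyMeasurable_apply {F : X → lp (fun _ : ι => E) q} (hF : AEStronglyMeasurable F μ)
    (k : ι) : AEStronglyMeasurable (fun x => F x k) μ :=
  have hcont : Continuous fun ξ : lp (fun _ : ι => E) q => ξ k :=
    (continuous_apply k).comp lp.uniformContinuous_coe.continuous
  hcont.comp_aestronglyMeasurable hF

lemma aestronglyMeasurable_of_apply [Countable ι] (hq : q ≠ ⊤) {F : X → lp (fun _ : ι => E) q}
    (hF : ∀ k, AEStronglyMeasurable (fun x => F x k) μ) : AEStronglyMeasurable F μ := by
  classical
  refine aestronglyMeasurable_of_tendsto_ae (u := (atTop : Filter (Finset ι)))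
    (f := fun s x => ∑ k ∈ s, lp.single q k (F x k)) (fun s => ?_)
    (Eventually.of_forall fun x => lp.hasSum_single hq (F x))
  exact Finset.aestronglyMeasurable_fun_sum s fun k _ =>
    (lp.isometry_single k).continuous.comp_aestronglyMeasurable (hF k)

end SequenceSpace

section Uncurry

variable {X ι E 𝕜 : Type*} [MeasurableSpace X] [MeasurableSpace ι] [MeasurableSingletonClass ι]
  [Countable ι] [NormedAddCommGroup E] [NormedField 𝕜] [NormedSpace 𝕜 E]
  {μ : Measure X} [SFinite μ] {q : ℝ≥0∞} [Fact (1 ≤ q)]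

lemma eLpNorm_uncurry (hq : q ≠ ⊤) {F : X → lp (fun _ : ι => E) q}
    (hF : AEStronglyMeasurable F μ) :
    eLpNorm (fun z : X × ι => F z.1 z.2) q (μ.prod Measure.count) = eLpNorm F q μ := by
  have hq0 : q ≠ 0 := (one_pos.trans_le Fact.out).ne'
  simp_rw [eLpNorm_eq_lintegral_rpow_enorm_toReal hq0 hq, lintegral_prod_count,
    enorm_rpow_eq_tsum_enorm (toReal_pos_of_one_le hq)]
  rw [lintegral_tsum fun k => (aestronglyMeasurable_apply hF k).enorm.pow_const _]

lemma memLp_uncurry (hq : q ≠ ⊤) {F : X → lp (fun _ : ι => E) q} (hF : MemLp F q μ) :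
    MemLp (fun z : X × ι => F z.1 z.2) q (μ.prod Measure.count) :=
  ⟨aestronglyMeasurable_prod_count_iff.mpr (aestronglyMeasurable_apply hF.1),
    (eLpNorm_uncurry hq hF.1).trans_lt hF.2⟩

lemma ae_memℓp_of_memLp (hq : q ≠ ⊤) {f : X × ι → E} (hf : MemLp f q (μ.prod Measure.count)) :
    ∀ᵐ x ∂μ, Memℓp (fun k => f (x, k)) q := by
  have hq0 : q ≠ 0 := (one_pos.trans_le Fact.out).ne'
  have hmeas (k : ι) : AEMeasurable (fun x => ‖f (x, k)‖ₑ ^ q.toReal) μ :=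
    (aestronglyMeasurable_prod_count_iff.mp hf.1 k).enorm.pow_const _
  have hfin : ∫⁻ x, ∑' k, ‖f (x, k)‖ₑ ^ q.toReal ∂μ ≠ ⊤ := by
    rw [lintegral_tsum hmeas, ← lintegral_prod_count fun z => ‖f z‖ₑ ^ q.toReal]
    exact (lintegral_rpow_enorm_lt_top_of_eLpNorm_lt_top hq0 hq hf.2).ne
  filter_upwards [ae_lt_top' (AEMeasurable.tsum hmeas) hfin] with x hx
  exact memℓp_of_tsum_enorm_ne_top (toReal_pos_of_one_le hq) hx.ne

lemma exists_memLp_uncurry_ae_eq (hq : q ≠ ⊤) {f : X × ι → E}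
    (hf : MemLp f q (μ.prod Measure.count)) :
    ∃ F : X → lp (fun _ : ι => E) q, MemLp F q μ ∧
      (fun z => F z.1 z.2) =ᵐ[μ.prod Measure.count] f := by
  obtain ⟨F, hF⟩ := exists_lp_valued_of_memℓp (q := q) f
  have hFf : (fun z : X × ι => F z.1 z.2) =ᵐ[μ.prod Measure.count] f :=
    ae_prod_count_iff.mpr ((ae_memℓp_of_memLp hq hf).mono hF)
  have hFm : AEStronglyMeasurable F μ := aestronglyMeasurable_of_apply hq <|
    aestronglyMeasurable_prod_count_iff.mp (hf.1.congr hFf.symm)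
  exact ⟨F, ⟨hFm, by rw [← eLpNorm_uncurry hq hFm, eLpNorm_congr_ae hFf]; exact hf.2⟩, hFf⟩

variable (𝕜) in
/-- The isometric embedding of `L^q(μ; ℓ^q(ι))` into `L^q` of the product of `μ` with the counting
measure, `F ↦ ((x, k) ↦ F x k)`. -/
def uncurryLpₗᵢ (hq : q ≠ ⊤) :
    Lp (lp (fun _ : ι => E) q) q μ →ₗᵢ[𝕜] Lp E q (μ.prod (Measure.count : Measure ι)) where
  toFun F := (memLp_uncurry hq (Lp.memLp F)).toLp
  map_add' F G := by
    rw [← MemLp.toLp_add, MemLp.toLp_eq_toLp_iff]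
    refine ae_prod_count_iff.mpr ((Lp.coeFn_add F G).mono fun x hx k => ?_)
    simp only [hx, Pi.add_apply, lp.coeFn_add]
  map_smul' c F := by
    rw [RingHom.id_apply, ← MemLp.toLp_const_smul, MemLp.toLp_eq_toLp_iff]
    refine ae_prod_count_iff.mpr ((Lp.coeFn_smul c F).mono fun x hx k => ?_)
    simp only [hx, Pi.smul_apply, lp.coeFn_smul]
  norm_map' F := by
    rw [LinearMap.coe_mk, AddHom.coe_mk, Lp.norm_toLp,
      eLpNorm_uncurry hq (Lp.aestronglyMeasurable F), Lp.norm_def]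

lemma uncurryLpₗᵢ_ae (hq : q ≠ ⊤) (F : Lp (lp (fun _ : ι => E) q) q μ) :
    ∀ᵐ x ∂μ, ∀ k, uncurryLpₗᵢ 𝕜 hq F (x, k) = F x k :=
  ae_prod_count_iff.mp (memLp_uncurry hq (Lp.memLp F)).coeFn_toLp

lemma uncurryLpₗᵢ_surjective (hq : q ≠ ⊤) :
    Function.Surjective (uncurryLpₗᵢ 𝕜 hq (ι := ι) (E := E) (μ := μ)) := by
  intro f
  obtain ⟨F, hF, hFf⟩ := exists_memLp_uncurry_ae_eq hq (Lp.memLp f)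
  refine ⟨hF.toLp, Lp.ext (ae_prod_count_iff.mpr ?_)⟩
  filter_upwards [uncurryLpₗᵢ_ae (𝕜 := 𝕜) hq hF.toLp, hF.coeFn_toLp, ae_prod_count_iff.mp hFf]
    with x huncurry htoLp hx k
  rw [huncurry, htoLp, hx]

variable (𝕜) in
/-- Currying: `L^q` of the product of `μ` with the counting measure on `ι` is isometric to
`L^q(μ; ℓ^q(ι))`. For `q = 2` this is the direct integral over `μ` of copies of `ℓ²(ι)`. -/
def curryLpₗᵢ (hq : q ≠ ⊤) :
    Lp E q (μ.prod (Measure.count : Measure ι)) ≃ₗᵢ[𝕜] Lp (lp (fun _ : ι => E) q) q μ :=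
  (LinearIsometryEquiv.ofSurjective (uncurryLpₗᵢ 𝕜 hq) (uncurryLpₗᵢ_surjective hq)).symm

lemma curryLpₗᵢ_ae (hq : q ≠ ⊤) (f : Lp E q (μ.prod (Measure.count : Measure ι))) :
    ∀ᵐ x ∂μ, ∀ k, curryLpₗᵢ 𝕜 hq f x k = f (x, k) := by
  have huncurry : uncurryLpₗᵢ 𝕜 hq (curryLpₗᵢ 𝕜 hq f) = f :=
    (LinearIsometryEquiv.ofSurjective (uncurryLpₗᵢ 𝕜 hq)
      (uncurryLpₗᵢ_surjective hq)).apply_symm_apply f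
  filter_upwards [uncurryLpₗᵢ_ae (𝕜 := 𝕜) hq (curryLpₗᵢ 𝕜 hq f)] with x hx k
  rw [← hx k, huncurry]

end Uncurry

section WeightedComposition

variable {X Y E 𝕜 : Type*} [MeasurableSpace X] [MeasurableSpace Y] [NormedField 𝕜]
  [NormedAddCommGroup E] [NormedSpace 𝕜 E]

/-- The map `φ` carries the measure `‖w‖ ^ q • μ` to `ν`. This is the change of variables formula
that makes the weighted composition `f ↦ w • (f ∘ φ)` an isometry from `L^q(ν)` to `L^q(μ)`. The
weight is nowhere zero, so that `μ` itself is absolutely continuous with respect to the weighted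
measure. -/
structure WeightedMeasurePreserving (q : ℝ≥0∞) (w : X → 𝕜) (φ : X → Y) (μ : Measure X)
    (ν : Measure Y) : Prop where
  stronglyMeasurable_weight : StronglyMeasurable w
  weight_ne_zero : ∀ x, w x ≠ 0
  measurePreserving : MeasurePreserving φ (μ.withDensity fun x => ‖w x‖ₑ ^ q.toReal) ν

namespace WeightedMeasurePreserving

variable {q : ℝ≥0∞} {w : X → 𝕜} {φ : X → Y} {ψ : Y → X} {μ : Measure X} {ν : Measure Y}

lemma quasiMeasurePreserving (h : WeightedMeasurePreserving q w φ μ ν) :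
    Measure.QuasiMeasurePreserving φ μ ν := by
  refine h.measurePreserving.quasiMeasurePreserving.mono_left ?_
  refine withDensity_absolutelyContinuous'
    (h.stronglyMeasurable_weight.enorm.pow_const _).aemeasurable (ae_of_all _ fun x => ?_)
  exact (ENNReal.rpow_pos (enorm_pos.mpr (h.weight_ne_zero x)) enorm_ne_top).ne'

lemma eLpNorm_smul_comp (h : WeightedMeasurePreserving q w φ μ ν) (hq0 : q ≠ 0) (hq : q ≠ ⊤)
    {f : Y → E} (hf : AEStronglyMeasurable f ν) :
    eLpNorm (fun x => w x • f (φ x)) q μ = eLpNorm f q ν := by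
  have hw : Measurable fun x => ‖w x‖ₑ ^ q.toReal :=
    h.stronglyMeasurable_weight.enorm.pow_const _
  have hfin (x : X) : ‖w x‖ₑ ^ q.toReal < ⊤ :=
    ENNReal.rpow_lt_top_of_nonneg ENNReal.toReal_nonneg enorm_ne_top
  rw [← eLpNorm_comp_measurePreserving hf h.measurePreserving,
    eLpNorm_eq_lintegral_rpow_enorm_toReal hq0 hq, eLpNorm_eq_lintegral_rpow_enorm_toReal hq0 hq,
    lintegral_withDensity_eq_lintegral_mul_non_measurable _ hw (ae_of_all _ hfin)]
  simp only [enorm_smul, ENNReal.mul_rpow_of_nonneg _ _ ENNReal.toReal_nonneg, Pi.mul_apply,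
    Function.comp_apply]

lemma memLp_smul_comp (h : WeightedMeasurePreserving q w φ μ ν) (hq0 : q ≠ 0) (hq : q ≠ ⊤)
    {f : Y → E} (hf : MemLp f q ν) : MemLp (fun x => w x • f (φ x)) q μ :=
  ⟨h.stronglyMeasurable_weight.aestronglyMeasurable.smul
      (hf.1.comp_quasiMeasurePreserving h.quasiMeasurePreserving),
    (h.eLpNorm_smul_comp hq0 hq hf.1).trans_lt hf.2⟩

lemma exists_memLp_smul_comp_ae_eq (h : WeightedMeasurePreserving q w φ μ ν) (hq0 : q ≠ 0)
    (hq : q ≠ ⊤) (hψ : Measurable ψ) (hψφ : ∀ᵐ x ∂μ, ψ (φ x) = x) {g : X → E}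
    (hgm : StronglyMeasurable g) (hg : MemLp g q μ) :
    ∃ f : Y → E, MemLp f q ν ∧ (fun x => w x • f (φ x)) =ᵐ[μ] g := by
  let f : Y → E := fun y => (w (ψ y))⁻¹ • g (ψ y)
  have hfm : AEStronglyMeasurable f ν :=
    ((h.stronglyMeasurable_weight.comp_measurable hψ).inv₀.smul
      (hgm.comp_measurable hψ)).aestronglyMeasurable
  have hfg : (fun x => w x • f (φ x)) =ᵐ[μ] g := by
    filter_upwards [hψφ] with x hx
    simp only [f, hx, smul_inv_smul₀ (h.weight_ne_zero x)]
  exact ⟨f, ⟨hfm, by rw [← h.eLpNorm_smul_comp hq0 hq hfm, eLpNorm_congr_ae hfg]; exact hg.2⟩, hfg⟩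

variable [hq1 : Fact (1 ≤ q)]

/-- The weighted composition operator `f ↦ w • (f ∘ φ)`, as an isometry from `L^q(ν)` to
`L^q(μ)`. -/
def smulCompLpₗᵢ (h : WeightedMeasurePreserving q w φ μ ν) (hq : q ≠ ⊤) :
    Lp E q ν →ₗᵢ[𝕜] Lp E q μ where
  toFun f := (h.memLp_smul_comp (one_pos.trans_le hq1.out).ne' hq (Lp.memLp f)).toLp
  map_add' f g := by
    rw [← MemLp.toLp_add, MemLp.toLp_eq_toLp_iff]
    filter_upwards [h.quasiMeasurePreserving.ae (Lp.coeFn_add f g)] with x hx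
    simp only [hx, Pi.add_apply, smul_add]
  map_smul' c f := by
    rw [RingHom.id_apply, ← MemLp.toLp_const_smul, MemLp.toLp_eq_toLp_iff]
    filter_upwards [h.quasiMeasurePreserving.ae (Lp.coeFn_smul c f)] with x hx
    simp only [hx, Pi.smul_apply, smul_comm c]
  norm_map' f := by
    rw [LinearMap.coe_mk, AddHom.coe_mk, Lp.norm_toLp,
      h.eLpNorm_smul_comp (one_pos.trans_le hq1.out).ne' hq (Lp.aestronglyMeasurable f),
      Lp.norm_def]

lemma smulCompLpₗᵢ_ae (h : WeightedMeasurePreserving q w φ μ ν) (hq : q ≠ ⊤) (f : Lp E q ν) :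
    ∀ᵐ x ∂μ, h.smulCompLpₗᵢ hq f x = w x • f (φ x) :=
  (h.memLp_smul_comp (one_pos.trans_le hq1.out).ne' hq (Lp.memLp f)).coeFn_toLp

lemma smulCompLpₗᵢ_surjective (h : WeightedMeasurePreserving q w φ μ ν) (hq : q ≠ ⊤)
    (hψ : Measurable ψ) (hψφ : ∀ᵐ x ∂μ, ψ (φ x) = x) :
    Function.Surjective (h.smulCompLpₗᵢ hq (E := E)) := by
  intro g
  obtain ⟨f, hf, hfg⟩ := h.exists_memLp_smul_comp_ae_eq (one_pos.trans_le hq1.out).ne' hq hψ hψφ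
    (Lp.stronglyMeasurable g) (Lp.memLp g)
  refine ⟨hf.toLp, Lp.ext ?_⟩
  filter_upwards [h.smulCompLpₗᵢ_ae hq hf.toLp, h.quasiMeasurePreserving.ae hf.coeFn_toLp, hfg]
    with x hcomp htoLp hx
  rw [hcomp, htoLp, hx]

end WeightedMeasurePreserving

end WeightedComposition

section DilationTiling

lemma zpow_le_iff_le_floor_logb {a y : ℝ} (ha : 1 < a) (hy : 0 < y) (k : ℤ) :
    a ^ k ≤ y ↔ k ≤ ⌊Real.logb a y⌋ := by
  rw [Int.le_floor, Real.le_logb_iff_rpow_le ha hy, Real.rpow_intCast]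

lemma setLIntegral_comp_mul_left {c : ℝ} (hc : c ≠ 0) {s : Set ℝ} (hs : MeasurableSet s)
    (g : ℝ → ℝ≥0∞) :
    ∫⁻ x in s, ENNReal.ofReal |c| * g (c * x) = ∫⁻ y in (c⁻¹ * ·) ⁻¹' s, g y := by
  have himage : (c⁻¹ * ·) ⁻¹' s = (c * ·) '' s :=
    ((Equiv.mulLeft₀ c hc).image_eq_preimage_symm s).symm
  rw [himage, lintegral_image_eq_lintegral_abs_deriv_mul hs (f' := fun _ => c)
    (fun x _ => by simpa using ((hasDerivAt_id x).const_mul c).hasDerivWithinAt)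
    (mul_right_injective₀ hc).injOn]

/-- The fundamental domain `(-a^p, -1] ∪ [1, a^p)` for the dilation by `a^p` of `ℝ \ {0}`. -/
def dilationShell (a : ℝ) (p : ℕ) : Set ℝ :=
  Set.Ioc (-(a ^ p)) (-1) ∪ Set.Ico 1 (a ^ p)

lemma measurableSet_dilationShell (a : ℝ) (p : ℕ) : MeasurableSet (dilationShell a p) :=
  measurableSet_Ioc.union measurableSet_Ico

lemma mem_dilationShell_iff {a x : ℝ} {p : ℕ} :
    x ∈ dilationShell a p ↔ 1 ≤ |x| ∧ |x| < a ^ p := by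
  simp only [dilationShell, Set.mem_union, Set.mem_Ioc, Set.mem_Ico]
  rcases abs_cases x with ⟨hx, _⟩ | ⟨hx, _⟩ <;> rw [hx] <;> grind

lemma ne_zero_of_mem_dilationShell {a x : ℝ} {p : ℕ} (hx : x ∈ dilationShell a p) : x ≠ 0 :=
  abs_pos.mp (one_pos.trans_le (mem_dilationShell_iff.mp hx).1)

lemma zpow_mul_mem_dilationShell_iff {a y : ℝ} (ha : 1 < a) (hy : y ≠ 0) (p : ℕ) (k : ℤ) :
    a ^ k * y ∈ dilationShell a p ↔
      0 ≤ ⌊Real.logb a |y|⌋ + k ∧ ⌊Real.logb a |y|⌋ + k < p := by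
  have ha0 : 0 < a := one_pos.trans ha
  have hk : 0 < a ^ k := zpow_pos ha0 k
  have hlower : 1 ≤ a ^ k * |y| ↔ a ^ (-k) ≤ |y| := by
    rw [zpow_neg, inv_le_iff_one_le_mul₀' hk]
  have hupper : a ^ k * |y| < a ^ p ↔ ¬ a ^ ((p : ℤ) - k) ≤ |y| := by
    rw [not_le, zpow_sub₀ ha0.ne', lt_div_iff₀ hk, mul_comm, zpow_natCast]
  rw [mem_dilationShell_iff, abs_mul, abs_of_pos hk, hlower, hupper,
    zpow_le_iff_le_floor_logb ha (abs_pos.mpr hy), zpow_le_iff_le_floor_logb ha (abs_pos.mpr hy)]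
  omega

variable {p : ℕ} [NeZero p]

lemma modFin_eq_iff {m : ℤ} {i : Fin p} : modFin p m = i ↔ m % (p : ℤ) = (i : ℕ) := by
  have hm : 0 ≤ m % (p : ℤ) := Int.emod_nonneg m (mod_cast NeZero.ne p)
  have hval : ((modFin p m : ℕ) : ℤ) = m % (p : ℤ) := Int.toNat_of_nonneg hm
  rw [Fin.ext_iff, ← hval, Nat.cast_inj]

lemma eq_neg_add_emod_iff {L k : ℤ} {i : Fin p} :
    k = -L + (L - (i : ℕ)) % (p : ℤ) ↔
      (0 ≤ L + k ∧ L + k < p) ∧ modFin p (-k) = i := by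
  have hp : (p : ℤ) ≠ 0 := mod_cast NeZero.ne p
  have hi : 0 ≤ ((i : ℕ) : ℤ) ∧ ((i : ℕ) : ℤ) < p := ⟨Int.natCast_nonneg _, mod_cast i.isLt⟩
  have hdiff : L + k - (L - (i : ℕ)) = (i : ℕ) - -k := by ring
  rw [modFin_eq_iff, Int.emod_eq_iff hp, eq_neg_add_iff_add_eq, eq_comm (a := L + k),
    Int.emod_eq_iff hp, hdiff, Int.natAbs_natCast]
  simp only [hi, true_and, and_assoc]

/-- The map `(x, k) ↦ (a^{-k} x, -k mod p)` from `E × ℤ` to `ℝ × {0, …, p - 1}`, where `E` is the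
dilation shell; the representation space is transported along it. -/
def dilationMap (a : ℝ) (p : ℕ) [NeZero p] (z : ℝ × ℤ) : ℝ × Fin p :=
  (a ^ (-z.2) * z.1, modFin p (-z.2))

/-- The unique `k` with `k ≡ -i mod p` for which `a^k y` lies in the dilation shell, as a function
of `(y, i)` with `y ≠ 0`. -/
def dilationLevel (a : ℝ) (p : ℕ) (y : ℝ × Fin p) : ℤ :=
  -⌊Real.logb a |y.1|⌋ + (⌊Real.logb a |y.1|⌋ - ((y.2 : ℕ) : ℤ)) % (p : ℤ)

/-- The inverse `(y, i) ↦ (a^k y, k)` of `dilationMap`, where `k` is the level of `(y, i)`. -/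
def dilationInv (a : ℝ) (p : ℕ) (y : ℝ × Fin p) : ℝ × ℤ :=
  (a ^ dilationLevel a p y * y.1, dilationLevel a p y)

lemma measurable_dilationMap (a : ℝ) : Measurable (dilationMap a p) :=
  measurable_from_prod_countable_left fun k => by unfold dilationMap; fun_prop

lemma measurable_dilationLevel (a : ℝ) (p : ℕ) : Measurable (dilationLevel a p) := by
  refine measurable_from_prod_countable_left fun i => ?_
  have hfloor : Measurable fun y : ℝ => ⌊Real.logb a |y|⌋ := by
    unfold Real.logb
    exact Int.measurable_floor.comp (by fun_prop)
  exact (measurable_of_countable fun L : ℤ => -L + (L - ((i : ℕ) : ℤ)) % (p : ℤ)).comp hfloor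

lemma measurable_dilationInv (a : ℝ) (p : ℕ) : Measurable (dilationInv a p) :=
  (((measurable_of_countable fun k : ℤ => a ^ k).comp (measurable_dilationLevel a p)).mul
    measurable_fst).prodMk (measurable_dilationLevel a p)

lemma eq_dilationLevel_iff {a y : ℝ} (ha : 1 < a) (hy : y ≠ 0) {i : Fin p} {k : ℤ} :
    k = dilationLevel a p (y, i) ↔ a ^ k * y ∈ dilationShell a p ∧ modFin p (-k) = i := by
  rw [zpow_mul_mem_dilationShell_iff ha hy]
  exact eq_neg_add_emod_iff

lemma dilationInv_dilationMap {a x : ℝ} (ha : 1 < a) (hx : x ∈ dilationShell a p) (k : ℤ) :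
    dilationInv a p (dilationMap a p (x, k)) = (x, k) := by
  have ha0 : a ≠ 0 := (one_pos.trans ha).ne'
  have hcancel : a ^ k * (a ^ (-k) * x) = x := by
    rw [← mul_assoc, ← zpow_add₀ ha0, add_neg_cancel, zpow_zero, one_mul]
  have hlevel : dilationLevel a p (dilationMap a p (x, k)) = k :=
    ((eq_dilationLevel_iff ha
      (mul_ne_zero (zpow_ne_zero _ ha0) (ne_zero_of_mem_dilationShell hx))).mpr
      ⟨hcancel.symm ▸ hx, rfl⟩).symm
  rw [dilationInv, hlevel, dilationMap, hcancel]

lemma tsum_indicator_dilationShell {a y : ℝ} (ha : 1 < a) (hy : y ≠ 0) (g : Fin p → ℝ≥0∞) :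
    ∑' k : ℤ, ((a ^ k * ·) ⁻¹' dilationShell a p).indicator (fun _ => g (modFin p (-k))) y =
      ∑ i, g i := by
  have hlevel (i : Fin p) := (eq_dilationLevel_iff ha hy (i := i)).mp rfl
  have hinj : Function.Injective fun i : Fin p => dilationLevel a p (y, i) := fun i j hij => by
    rw [← (hlevel i).2, ← (hlevel j).2]
    exact congrArg (fun k => modFin p (-k)) hij
  rw [← hinj.tsum_eq, tsum_fintype]
  · refine Finset.sum_congr rfl fun i _ => ?_
    rw [Set.indicator_of_mem (Set.mem_preimage.mpr (hlevel i).1), (hlevel i).2]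
  · intro k hk
    have hmem : a ^ k * y ∈ dilationShell a p :=
      Set.mem_of_indicator_ne_zero (s := (a ^ k * ·) ⁻¹' dilationShell a p) hk
    exact ⟨modFin p (-k), ((eq_dilationLevel_iff ha hy).mpr ⟨hmem, rfl⟩).symm⟩

lemma lintegral_comp_dilationMap {a : ℝ} (ha : 1 < a) {g : ℝ × Fin p → ℝ≥0∞}
    (hg : Measurable g) :
    ∫⁻ z, ENNReal.ofReal (a ^ (-z.2)) * g (dilationMap a p z)
        ∂(volume.restrict (dilationShell a p)).prod (Measure.count : Measure ℤ) =
      ∫⁻ y, g y ∂prodMeas p := by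
  have ha0 : 0 < a := one_pos.trans ha
  have hS := measurableSet_dilationShell a p
  have htile (k : ℤ) : MeasurableSet ((a ^ k * ·) ⁻¹' dilationShell a p) :=
    measurable_const_mul _ hS
  have hslice (i : Fin p) : Measurable fun y => g (y, i) := by fun_prop
  have hscale (k : ℤ) : ∫⁻ x in dilationShell a p,
        ENNReal.ofReal (a ^ (-k)) * g (dilationMap a p (x, k)) =
      ∫⁻ y, ((a ^ k * ·) ⁻¹' dilationShell a p).indicator (fun y => g (y, modFin p (-k))) y := by
    have h := setLIntegral_comp_mul_left (zpow_ne_zero (-k) ha0.ne') hS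
      fun y => g (y, modFin p (-k))
    rwa [abs_of_pos (zpow_pos ha0 _), zpow_neg, inv_inv, ← zpow_neg,
      ← lintegral_indicator (htile k)] at h
  rw [lintegral_prod_count, tsum_congr hscale, ← lintegral_tsum fun k =>
    ((hslice _).indicator (htile k)).aemeasurable, prodMeas, lintegral_prod _ hg.aemeasurable]
  refine lintegral_congr_ae ?_
  filter_upwards [Measure.ae_ne volume 0] with y hy
  rw [lintegral_count, tsum_fintype (L := .unconditional _) fun i => g (y, i)]
  exact tsum_indicator_dilationShell ha hy fun i => g (y, i)

/-- The weight `√(a^{-k})` on `E × ℤ`, the square root of the Jacobian of `dilationMap`. -/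
def dilationWeight (a : ℝ) (z : ℝ × ℤ) : ℂ := (Real.sqrt (a ^ (-z.2)) : ℂ)

lemma enorm_dilationWeight_rpow_two {a : ℝ} (ha : 0 ≤ a) (z : ℝ × ℤ) :
    ‖dilationWeight a z‖ₑ ^ (2 : ℝ≥0∞).toReal = ENNReal.ofReal (a ^ (-z.2)) := by
  rw [enorm_rpow_eq_ofReal ENNReal.toReal_nonneg, dilationWeight, Complex.norm_real,
    Real.norm_of_nonneg (Real.sqrt_nonneg _), ENNReal.toReal_ofNat, Real.rpow_two,
    Real.sq_sqrt (zpow_nonneg ha _)]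

lemma weightedMeasurePreserving_dilationMap {a : ℝ} (ha : 1 < a) :
    WeightedMeasurePreserving 2 (dilationWeight a) (dilationMap a p)
      ((volume.restrict (dilationShell a p)).prod Measure.count) (prodMeas p) where
  stronglyMeasurable_weight :=
    ((measurable_of_countable fun k : ℤ => (Real.sqrt (a ^ (-k)) : ℂ)).comp
      measurable_snd).stronglyMeasurable
  weight_ne_zero z := Complex.ofReal_ne_zero.mpr
    (Real.sqrt_pos.mpr (zpow_pos (one_pos.trans ha) _)).ne'
  measurePreserving := by
    have ha0 : 0 ≤ a := zero_le_one.trans ha.le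
    refine ⟨measurable_dilationMap a, Measure.ext_of_lintegral _ fun g hg => ?_⟩
    have hW : Measurable fun z : ℝ × ℤ => ENNReal.ofReal (a ^ (-z.2)) :=
      (measurable_of_countable fun k : ℤ => ENNReal.ofReal (a ^ (-k))).comp measurable_snd
    simp_rw [enorm_dilationWeight_rpow_two ha0]
    rw [lintegral_map hg (measurable_dilationMap a), ← lintegral_comp_dilationMap ha hg]
    exact lintegral_withDensity_eq_lintegral_mul _ hW (hg.comp (measurable_dilationMap a))

end DilationTiling

section DilationTransform

variable {a : ℝ} {p : ℕ} [NeZero p]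

lemma smulCompLpₗᵢ_dilationMap_surjective (ha : 1 < a) :
    Function.Surjective
      ((weightedMeasurePreserving_dilationMap (p := p) ha).smulCompLpₗᵢ (E := ℂ)
        ENNReal.ofNat_ne_top) :=
  (weightedMeasurePreserving_dilationMap ha).smulCompLpₗᵢ_surjective ENNReal.ofNat_ne_top
    (measurable_dilationInv a p) <| ae_prod_count_iff.mpr <|
      (ae_restrict_mem (measurableSet_dilationShell a p)).mono fun _ hx =>
        dilationInv_dilationMap ha hx

/-- The unitary `Ψ` from `L²(ℝ)^p` to `L²(E; ℓ²(ℤ))`, with `E` the dilation shell: transport along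
`dilationMap` with weight `√(a^{-k})`, followed by currying. -/
def dilationTransform (p : ℕ) [NeZero p] (ha : 1 < a) :
    Lp ℂ 2 (prodMeas p) ≃ₗᵢ[ℂ] Lp ellTwo 2 (volume.restrict (dilationShell a p)) :=
  (LinearIsometryEquiv.ofSurjective _ (smulCompLpₗᵢ_dilationMap_surjective ha)).trans
    (curryLpₗᵢ ℂ ENNReal.ofNat_ne_top)

lemma ae_forall_dilationMap (ha : 1 < a) {P : ℝ × Fin p → Prop} (hP : ∀ᵐ y ∂prodMeas p, P y) :
    ∀ᵐ x ∂volume.restrict (dilationShell a p), ∀ k, P (dilationMap a p (x, k)) :=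
  ae_prod_count_iff.mp ((weightedMeasurePreserving_dilationMap ha).quasiMeasurePreserving.ae hP)

lemma dilationTransform_ae (ha : 1 < a) (f : Lp ℂ 2 (prodMeas p)) :
    ∀ᵐ x ∂volume.restrict (dilationShell a p), ∀ k, dilationTransform p ha f x k =
      dilationWeight a (x, k) * f (dilationMap a p (x, k)) := by
  have hcomp := (weightedMeasurePreserving_dilationMap (p := p) ha).smulCompLpₗᵢ_ae
    ENNReal.ofNat_ne_top f
  filter_upwards [ae_prod_count_iff.mp hcomp, curryLpₗᵢ_ae (𝕜 := ℂ) ENNReal.ofNat_ne_top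
    ((weightedMeasurePreserving_dilationMap ha).smulCompLpₗᵢ ENNReal.ofNat_ne_top f)]
    with x hx hcurry k
  exact (hcurry k).trans (hx k)

lemma modFin_add_one (m : ℤ) : modFin p (m + 1) = modFin p m + 1 := by
  rw [modFin_eq_iff, Fin.val_add, Int.add_emod, modFin_eq_iff.mp (rfl : modFin p m = _),
    Int.natCast_mod, Nat.cast_add, Fin.val_one', Int.natCast_mod, Nat.cast_one,
    Int.add_emod_emod]

lemma dilationMap_sub_one (ha : a ≠ 0) (x : ℝ) (k : ℤ) :
    dilationMap a p (x, k - 1) =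
      (a * (dilationMap a p (x, k)).1, (dilationMap a p (x, k)).2 + 1) := by
  simp only [dilationMap, neg_sub', sub_neg_eq_add, modFin_add_one, zpow_add_one₀ ha, mul_assoc,
    mul_left_comm a]

lemma dilationWeight_sub_one (ha : 0 < a) (x : ℝ) (k : ℤ) :
    dilationWeight a (x, k - 1) = dilationWeight a (x, k) * Real.sqrt a := by
  simp only [dilationWeight, neg_sub', sub_neg_eq_add, zpow_add_one₀ ha.ne',
    Real.sqrt_mul (zpow_nonneg ha.le _), Complex.ofReal_mul]

variable {f g : Lp ℂ 2 (prodMeas p)}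

lemma dilationTransform_of_ae_eq_dilation (ha : 1 < a)
    (hg : g =ᵐ[prodMeas p] fun y => Real.sqrt a * f (a * y.1, y.2 + 1)) :
    ∀ᵐ x ∂volume.restrict (dilationShell a p), ∀ k,
      dilationTransform p ha g x k = dilationTransform p ha f x (k - 1) := by
  have ha0 : 0 < a := one_pos.trans ha
  filter_upwards [dilationTransform_ae ha f, dilationTransform_ae ha g,
    ae_forall_dilationMap ha hg] with x hΨf hΨg hx k
  rw [hΨf, hΨg, hx, dilationMap_sub_one ha0.ne', dilationWeight_sub_one ha0, mul_assoc]

lemma dilationTransform_of_ae_eq_mul (ha : 1 < a) {c : ℝ × Fin p → ℂ}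
    (hg : g =ᵐ[prodMeas p] fun y => c y * f y) :
    ∀ᵐ x ∂volume.restrict (dilationShell a p), ∀ k, dilationTransform p ha g x k =
      c (dilationMap a p (x, k)) * dilationTransform p ha f x k := by
  filter_upwards [dilationTransform_ae ha f, dilationTransform_ae ha g,
    ae_forall_dilationMap ha hg] with x hΨf hΨg hx k
  rw [hΨf, hΨg, hx, mul_left_comm]

end DilationTransform

section Irreducibility

variable {𝕜 H : Type*} [RCLike 𝕜] [NormedAddCommGroup H] [InnerProductSpace 𝕜 H] [CompleteSpace H]

/-- The unitary representation of the group generated by `S` is irreducible: its only closed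
invariant subspaces are the trivial ones. -/
def ActsIrreducibly (S : Set (unitary (H →L[𝕜] H))) : Prop :=
  ∀ K : Submodule 𝕜 H, IsClosed (K : Set H) →
    (∀ g ∈ Subgroup.closure S, ∀ v ∈ K, (g : H →L[𝕜] H) v ∈ K) → K = ⊥ ∨ K = ⊤

lemma commute_starProjection {K : Submodule 𝕜 H} [K.HasOrthogonalProjection]
    {g : unitary (H →L[𝕜] H)} (hg : ∀ v ∈ K, (g : H →L[𝕜] H) v ∈ K)
    (hg' : ∀ v ∈ K, (↑g⁻¹ : H →L[𝕜] H) v ∈ K) :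
    Commute K.starProjection (g : H →L[𝕜] H) := by
  have hadjoint : K ∈ Module.End.invtSubmodule (g : H →L[𝕜] H).adjoint.toLinearMap := by
    rw [← ContinuousLinearMap.star_eq_adjoint, ← Unitary.coe_star, Unitary.star_eq_inv]
    exact hg'
  rw [ContinuousLinearMap.IsIdempotentElem.commute_iff K.isIdempotentElem_starProjection,
    Submodule.range_starProjection, Submodule.ker_starProjection]
  exact ⟨hg, ContinuousLinearMap.orthogonal_mem_invtSubmodule hadjoint⟩

lemma actsIrreducibly_of_commutant_scalar {S : Set (unitary (H →L[𝕜] H))}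
    (hS : ∀ A : H →L[𝕜] H, (∀ g ∈ S, Commute A (g : H →L[𝕜] H)) → ∃ c : 𝕜, A = c • 1) :
    ActsIrreducibly S := by
  intro K hK hinv
  have : CompleteSpace K := hK.completeSpace_coe
  obtain ⟨c, hc⟩ := hS K.starProjection fun g hg =>
    commute_starProjection (hinv g (Subgroup.subset_closure hg))
      (hinv g⁻¹ (inv_mem (Subgroup.subset_closure hg)))
  have hrange : LinearMap.range (c • (1 : H →L[𝕜] H)).toLinearMap = K := by
    rw [← hc, Submodule.range_starProjection]
  rcases eq_or_ne c 0 with rfl | hc0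
  · left
    rw [← hrange, zero_smul]
    exact LinearMap.range_zero
  · right
    rw [← hrange]
    exact LinearMap.range_eq_top.mpr fun v => ⟨c⁻¹ • v, smul_inv_smul₀ hc0 v⟩

end Irreducibility

section WeightedPermutation

variable {ι : Type*} {q : ℝ≥0∞} [Fact (1 ≤ q)]

lemma memℓp_circle_mul_comp (hq : q ≠ ⊤) (σ : Equiv.Perm ι) (w : ι → Circle)
    (ξ : lp (fun _ : ι => ℂ) q) : Memℓp (fun k => (w k : ℂ) * ξ (σ k)) q := by
  have hq0 := toReal_pos_of_one_le hq
  rw [memℓp_gen_iff hq0]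
  simpa only [norm_mul, Circle.norm_coe, one_mul, Function.comp_def] using
    σ.summable_iff.mpr (lp.hasSum_norm hq0 ξ).summable

/-- The surjective isometry `(ξ_k) ↦ (w_k ξ_{σ k})` of `ℓ^q(ι)`, for a permutation `σ` of `ι` and
unimodular weights `w`. -/
def weightedPermₗᵢ (hq : q ≠ ⊤) (σ : Equiv.Perm ι) (w : ι → Circle) :
    lp (fun _ : ι => ℂ) q ≃ₗᵢ[ℂ] lp (fun _ : ι => ℂ) q where
  toFun ξ := ⟨fun k => w k * ξ (σ k), memℓp_circle_mul_comp hq σ w ξ⟩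
  invFun ξ := ⟨fun k => ((w (σ.symm k))⁻¹ : Circle) * ξ (σ.symm k),
    memℓp_circle_mul_comp hq σ.symm (fun k => (w (σ.symm k))⁻¹) ξ⟩
  left_inv ξ := by
    ext k
    simp
  right_inv ξ := by
    ext k
    simp
  map_add' ξ η := by
    ext k
    exact mul_add _ _ _
  map_smul' c ξ := by
    ext k
    exact mul_left_comm _ _ _
  norm_map' ξ := by
    have hq0 := toReal_pos_of_one_le hq
    rw [lp.norm_eq_tsum_rpow hq0, lp.norm_eq_tsum_rpow hq0,
      ← σ.tsum_eq fun k => ‖ξ k‖ ^ q.toReal]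
    change (∑' k, ‖(w k : ℂ) * ξ (σ k)‖ ^ q.toReal) ^ (1 / q.toReal) = _
    simp only [norm_mul, Circle.norm_coe, one_mul]

end WeightedPermutation

section ShiftDiagonal

variable {𝕜 : Type*} [NormedField 𝕜] {q : ℝ≥0∞} [Fact (1 ≤ q)]
  {U T A : lp (fun _ : ℤ => 𝕜) q →L[𝕜] lp (fun _ : ℤ => 𝕜) q} {w : ℤ → 𝕜}

lemma shift_single (hU : ∀ ξ k, U ξ k = ξ (k - 1)) (k : ℤ) :
    U (lp.single q k 1) = lp.single q (k + 1) 1 := by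
  ext j
  simp only [hU, lp.single_apply, Pi.single_apply, sub_eq_iff_eq_add]

lemma diagonal_single (hT : ∀ ξ k, T ξ k = w k * ξ k) (k : ℤ) :
    T (lp.single q k 1) = w k • lp.single q k 1 := by
  ext j
  rcases eq_or_ne j k with rfl | hjk
  · exact hT _ _
  · rw [hT, lp.coeFn_smul, Pi.smul_apply, lp.single_apply_ne _ _ _ hjk, mul_zero, smul_zero]

lemma apply_single_add_of_commute_shift (hU : ∀ ξ k, U ξ k = ξ (k - 1)) (hAU : Commute A U)
    (n k j : ℤ) : A (lp.single q (k + n) 1) (j + n) = A (lp.single q k 1) j := by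
  have hstep (m : ℤ) :
      A (lp.single q (k + (m + 1)) 1) (j + (m + 1)) = A (lp.single q (k + m) 1) (j + m) := by
    have hcomm : A (U (lp.single q (k + m) 1)) = U (A (lp.single q (k + m) 1)) :=
      congr($hAU.eq (lp.single q (k + m) 1))
    rw [← add_assoc, ← add_assoc, ← shift_single hU, hcomm, hU, add_sub_cancel_right]
  have hper : Function.Periodic
      (fun m : ℤ => A (lp.single q (k + m) 1) (j + m)) 1 := hstep
  simpa using hper.int_mul_eq n

lemma mul_apply_single_of_commute_diagonal (hT : ∀ ξ k, T ξ k = w k * ξ k) (hAT : Commute A T)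
    (k j : ℤ) : w j * A (lp.single q k 1) j = w k * A (lp.single q k 1) j := by
  have hcomm : A (T (lp.single q k 1)) = T (A (lp.single q k 1)) :=
    congr($hAT.eq (lp.single q k 1))
  rw [← hT, ← hcomm, diagonal_single hT, map_smul, lp.coeFn_smul, Pi.smul_apply, smul_eq_mul]

lemma apply_single_eq_zero_of_commute (hw : ∀ d, Function.Periodic w d → d = 0)
    (hU : ∀ ξ k, U ξ k = ξ (k - 1)) (hT : ∀ ξ k, T ξ k = w k * ξ k) (hAU : Commute A U)
    (hAT : Commute A T) {k j : ℤ} (hjk : j ≠ k) : A (lp.single q k 1) j = 0 := by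
  by_contra hne
  refine hjk (sub_eq_zero.mp (hw (j - k) fun m => ?_))
  have h := mul_apply_single_of_commute_diagonal hT hAT (k + (m - k)) (j + (m - k))
  rw [apply_single_add_of_commute_shift hU hAU] at h
  convert mul_right_cancel₀ hne h using 2 <;> ring

lemma exists_eq_smul_one_of_commute (hq : q ≠ ⊤) (hw : ∀ d, Function.Periodic w d → d = 0)
    (hU : ∀ ξ k, U ξ k = ξ (k - 1)) (hT : ∀ ξ k, T ξ k = w k * ξ k) (hAU : Commute A U)
    (hAT : Commute A T) : ∃ c : 𝕜, A = c • 1 := by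
  refine ⟨A (lp.single q 0 1) 0, lp.ext_continuousLinearMap hq fun k => ?_⟩
  ext j
  change A (lp.single q k 1) j = A (lp.single q 0 1) 0 * lp.single (E := fun _ => 𝕜) q k 1 j
  rcases eq_or_ne j k with rfl | hjk
  · rw [lp.single_apply_self, mul_one]
    simpa using apply_single_add_of_commute_shift hU hAU j 0 0
  · rw [lp.single_apply_ne _ _ _ hjk, mul_zero]
    exact apply_single_eq_zero_of_commute hw hU hT hAU hAT hjk

end ShiftDiagonal

lemma exists_actsIrreducibly_shift_diagonal {w : ℤ → Circle}
    (hw : ∀ d, Function.Periodic w d → d = 0) :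
    ∃ U T : unitary (ellTwo →L[ℂ] ellTwo),
      (∀ ξ k, (U : ellTwo →L[ℂ] ellTwo) ξ k = ξ (k - 1)) ∧
      (∀ ξ k, (T : ellTwo →L[ℂ] ellTwo) ξ k = w k * ξ k) ∧ ActsIrreducibly {U, T} := by
  let U : unitary (ellTwo →L[ℂ] ellTwo) := Unitary.linearIsometryEquiv.symm
    (weightedPermₗᵢ ENNReal.ofNat_ne_top (Equiv.subRight 1) 1)
  let T : unitary (ellTwo →L[ℂ] ellTwo) := Unitary.linearIsometryEquiv.symm
    (weightedPermₗᵢ ENNReal.ofNat_ne_top (Equiv.refl ℤ) w)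
  have hU (ξ : ellTwo) (k : ℤ) : (U : ellTwo →L[ℂ] ellTwo) ξ k = ξ (k - 1) :=
    one_mul (ξ (k - 1))
  have hT (ξ : ellTwo) (k : ℤ) : (T : ellTwo →L[ℂ] ellTwo) ξ k = w k * ξ k := rfl
  refine ⟨U, T, hU, hT, actsIrreducibly_of_commutant_scalar fun A hA => ?_⟩
  refine exists_eq_smul_one_of_commute (w := fun k => (w k : ℂ)) ENNReal.ofNat_ne_top
    (fun d hd => hw d fun k => Circle.ext (hd k)) hU hT (hA U (by simp)) (hA T (by simp))

section NonPeriodicity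

lemma ee_sub (s t : ℝ) : ee (s - t) = ee s / ee t := by
  rw [ee, ee, ee, ← Circle.exp_sub]
  ring_nf

lemma eq_zero_of_ee_eq_one {t : ℝ} (h : ee t = 1) (ht : |t| < 1) : t = 0 := by
  obtain ⟨n, hn⟩ := Circle.exp_eq_one.mp h
  have htn : t = -n := mul_left_cancel₀ two_pi_pos.ne' (by linarith)
  rw [htn, abs_neg, ← Int.cast_abs, ← Int.cast_one, Int.cast_lt, Int.abs_lt_one_iff] at ht
  rw [htn, ht, Int.cast_zero, neg_zero]

lemma eq_zero_of_forall_ee_pow_mul_eq_one {r y : ℝ} (hr0 : r ≠ 0) (hr : |r| < 1)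
    (h : ∀ m : ℕ, ee (r ^ m * y) = 1) : y = 0 := by
  have hlim : Tendsto (fun m : ℕ => |r ^ m * y|) atTop (nhds 0) := by
    simpa using ((tendsto_pow_atTop_nhds_zero_of_abs_lt_one hr).mul_const y).abs
  obtain ⟨m, hm⟩ := (hlim.eventually_lt_const one_pos).exists
  exact (mul_eq_zero.mp (eq_zero_of_ee_eq_one (h m) hm)).resolve_left (pow_ne_zero m hr0)

lemma eq_zero_of_periodic_ee_zpow_mul {a x : ℝ} (ha : 1 < a) (hx : x ≠ 0) {d : ℤ}
    (hd : Function.Periodic (fun k : ℤ => ee (a ^ (-k) * x)) d) : d = 0 := by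
  have ha0 : 0 < a := one_pos.trans ha
  have hone (m : ℕ) : ee (a⁻¹ ^ m * (a ^ (-d) * x - x)) = 1 := by
    have hm : ee (a ^ (-((m : ℤ) + d)) * x) = ee (a ^ (-(m : ℤ)) * x) := hd m
    rw [inv_pow, ← zpow_natCast, ← zpow_neg, mul_sub, ee_sub, ← mul_assoc, ← zpow_add₀ ha0.ne',
      ← neg_add, hm, div_self']
  have hzero : a ^ (-d) * x - x = 0 :=
    eq_zero_of_forall_ee_pow_mul_eq_one (inv_ne_zero ha0.ne')
      (by rw [abs_of_pos (inv_pos.mpr ha0)]; exact inv_lt_one_of_one_lt₀ ha) hone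
  have hpow : a ^ (-d) = 1 := mul_right_cancel₀ hx (by rw [one_mul, sub_eq_zero.mp hzero])
  rwa [zpow_eq_one_iff_right₀ ha0.le ha.ne', neg_eq_zero] at hpow

variable {p : ℕ} [NeZero p]

/-- The coordinates `z_{-k mod p} e^{-2πi a^{-k} x}` of the point `z_C · î(x)` of the solenoid. -/
def cycleTranslate (a : ℝ) (zc : Fin p → Circle) (x : ℝ) (k : ℤ) : Circle :=
  zc (modFin p (-k)) * ee (a ^ (-k) * x)

lemma periodic_modFin_neg (d : ℤ) : Function.Periodic (fun k => modFin p (-k)) (d * p) := by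
  intro k
  rw [modFin_eq_iff, neg_add, ← neg_mul, Int.add_mul_emod_self_right]
  exact modFin_eq_iff.mp rfl

lemma eq_zero_of_periodic_cycleTranslate {a x : ℝ} (ha : 1 < a) (hx : x ≠ 0)
    (zc : Fin p → Circle) {d : ℤ} (hd : Function.Periodic (cycleTranslate a zc x) d) : d = 0 := by
  -- The factor coming from the cycle has period `p`, so it cancels over the period `d * p`.
  have hdp : Function.Periodic (cycleTranslate a zc x) (d * p) := by
    simpa [mul_comm] using hd.int_mul p
  have hee : Function.Periodic (fun k : ℤ => ee (a ^ (-k) * x)) (d * p) := by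
    convert hdp.div ((periodic_modFin_neg d).comp zc) using 1
    ext1 k
    exact (mul_div_cancel_left _ _).symm
  exact (mul_eq_zero.mp (eq_zero_of_periodic_ee_zpow_mul ha hx hee)).resolve_right
    (mod_cast NeZero.ne p)

end NonPeriodicity

theorem statement_14_general {a : ℝ} (ha : 1 < a) {p : ℕ} [NeZero p] (zc : Fin p → Circle)
    {U T : unitary (Lp ℂ 2 (prodMeas p) →L[ℂ] Lp ℂ 2 (prodMeas p))}
    (hU : ∀ f : Lp ℂ 2 (prodMeas p),
      (U : Lp ℂ 2 (prodMeas p) →L[ℂ] Lp ℂ 2 (prodMeas p)) f =ᵐ[prodMeas p]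
        fun y => Real.sqrt a * f (a * y.1, y.2 + 1))
    (hT : ∀ f : Lp ℂ 2 (prodMeas p),
      (T : Lp ℂ 2 (prodMeas p) →L[ℂ] Lp ℂ 2 (prodMeas p)) f =ᵐ[prodMeas p]
        fun y => zc y.2 * ee y.1 * f y) :
    ∃ Ψ : Lp ℂ 2 (prodMeas p) ≃ₗᵢ[ℂ] Lp ellTwo 2 (volume.restrict (dilationShell a p)),
      (∀ f, ∀ᵐ x ∂volume.restrict (dilationShell a p), ∀ k : ℤ,
        Ψ f x k = Real.sqrt (a ^ (-k)) * f (a ^ (-k) * x, modFin p (-k))) ∧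
      (∀ f, ∀ᵐ x ∂volume.restrict (dilationShell a p), ∀ k : ℤ,
        Ψ ((U : Lp ℂ 2 (prodMeas p) →L[ℂ] Lp ℂ 2 (prodMeas p)) f) x k = Ψ f x (k - 1)) ∧
      (∀ f, ∀ᵐ x ∂volume.restrict (dilationShell a p), ∀ k : ℤ,
        Ψ ((T : Lp ℂ 2 (prodMeas p) →L[ℂ] Lp ℂ 2 (prodMeas p)) f) x k =
          zc (modFin p (-k)) * ee (a ^ (-k) * x) * Ψ f x k) ∧
      ∀ x ∈ dilationShell a p, ∃ Ux Tx : unitary (ellTwo →L[ℂ] ellTwo),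
        (∀ ξ k, (Ux : ellTwo →L[ℂ] ellTwo) ξ k = ξ (k - 1)) ∧
        (∀ ξ k, (Tx : ellTwo →L[ℂ] ellTwo) ξ k =
          zc (modFin p (-k)) * ee (a ^ (-k) * x) * ξ k) ∧
        ActsIrreducibly {Ux, Tx} :=
  ⟨dilationTransform p ha, dilationTransform_ae ha,
    fun f => dilationTransform_of_ae_eq_dilation ha (hU f),
    fun f => dilationTransform_of_ae_eq_mul ha (hT f),
    fun _ hx => exists_actsIrreducibly_shift_diagonal fun _ =>
      eq_zero_of_periodic_cycleTranslate ha (ne_zero_of_mem_dilationShell hx) zc⟩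

theorem statement_14 (N : ℕ) (hN : 2 ≤ N) (p : ℕ) [NeZero p]
    (zc : Fin p → Circle) (hcycle : ∀ i : Fin p, zc i ^ N = zc (i + 1))
    (hper : ∀ i : Fin p, i ≠ 0 → zc i ≠ zc 0)  -- p is the exact period
    (U T : unitary (Lp ℂ 2 (prodMeas p) →L[ℂ] Lp ℂ 2 (prodMeas p)))
    (hUT : IsCycleRep N p zc U T) :
    ∃ Ψ : Lp ℂ 2 (prodMeas p) ≃ₗᵢ[ℂ]
        Lp ellTwo 2 ((volume : Measure ℝ).restrict (ESet N p)),
      -- the explicit formula for `Ψ`: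
      -- `Ψ(f)(x, m) = N^{−m/2} f(N^{−m} x, (−m) mod p)`
      (∀ f : Lp ℂ 2 (prodMeas p),
        ∀ᵐ x ∂((volume : Measure ℝ).restrict (ESet N p)), ∀ k : ℤ,
          ((Ψ f : ℝ → ellTwo) x : ℤ → ℂ) k
            = (Real.sqrt ((N : ℝ) ^ (-k : ℤ)) : ℂ) *
              (f : ℝ × Fin p → ℂ) ((N : ℝ) ^ (-k : ℤ) * x, modFin p (-k))) ∧
      -- `Ψ` intertwines `𝔯_C` with the direct integral `∫_E^⊕ π_{z_C·î(x)} dx`: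
      (∀ f : Lp ℂ 2 (prodMeas p),
        ∀ᵐ x ∂((volume : Measure ℝ).restrict (ESet N p)), ∀ k : ℤ,
          ((Ψ ((U : Lp ℂ 2 (prodMeas p) →L[ℂ] Lp ℂ 2 (prodMeas p)) f) : ℝ → ellTwo) x : ℤ → ℂ) k
            = ((Ψ f : ℝ → ellTwo) x : ℤ → ℂ) (k - 1)) ∧
      (∀ f : Lp ℂ 2 (prodMeas p),
        ∀ᵐ x ∂((volume : Measure ℝ).restrict (ESet N p)), ∀ k : ℤ,
          ((Ψ ((T : Lp ℂ 2 (prodMeas p) →L[ℂ] Lp ℂ 2 (prodMeas p)) f) : ℝ → ellTwo) x : ℤ → ℂ) k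
            = ((zc (modFin p (-k)) : Circle) : ℂ) * ((ee ((N : ℝ) ^ (-k : ℤ) * x) : Circle) : ℂ) *
              ((Ψ f : ℝ → ellTwo) x : ℤ → ℂ) k) ∧
      -- each fiber representation `π_{z_C·î(x)}`, `x ∈ E`, is irreducible
      (∀ x ∈ ESet N p,
        ∃ Ux Tx : unitary (ellTwo →L[ℂ] ellTwo),
          (∀ ξ : ellTwo, ∀ k : ℤ,
            (((Ux : ellTwo →L[ℂ] ellTwo) ξ : ellTwo) : ℤ → ℂ) k = (ξ : ℤ → ℂ) (k - 1)) ∧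
          (∀ ξ : ellTwo, ∀ k : ℤ,
            (((Tx : ellTwo →L[ℂ] ellTwo) ξ : ellTwo) : ℤ → ℂ) k
              = ((zc (modFin p (-k)) : Circle) : ℂ) *
                ((ee ((N : ℝ) ^ (-k : ℤ) * x) : Circle) : ℂ) * (ξ : ℤ → ℂ) k) ∧
          (∀ K : Submodule ℂ ellTwo, IsClosed (K : Set ellTwo) →
            (∀ g ∈ Subgroup.closure ({Ux, Tx} : Set (unitary (ellTwo →L[ℂ] ellTwo))),
              ∀ v ∈ K, (g : ellTwo →L[ℂ] ellTwo) v ∈ K) →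
            K = ⊥ ∨ K = ⊤)) :=
  statement_14_general (Nat.one_lt_cast.mpr hN) zc hUT.1 hUT.2

end
end

section
/- Let N = 3, m₀(z) = (1 + z²)/√2, W = |m₀|²/3, and let m be the associated measure on S₃ with m̂(λ) = ∫_{S₃} χ_λ dm. Then for every λ ∈ ℤ[1/3], m̂(λ) = 𝓗^s((𝐂 + λ) ∩ 𝐂), where 𝐂 is the middle-thirds Cantor set, s = log₃ 2 is its Hausdorff dimension, and 𝓗^s is the s-dimensional Hausdorff measure. In particular m̂(λ) = 0 whenever |λ| ≥ 1. -/
/-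
Write `s = log₃ 2` and `H t = 𝓗ˢ((𝐂 + t) ∩ 𝐂)`. Splitting both copies of `𝐂` into their two thirds
gives `H t = H (3t) + (H (3t + 2) + H (3t - 2)) / 2`. On the other side `d(m ∘ S)/dm = |m₀|²` and
`|m₀(z)|² = 1 + (z² + z⁻²) / 2` give the same relation for `m̂`, and it determines the values on
`3⁻ᵖ⁻¹ℤ` from those on `3⁻ᵖℤ`. So it is enough to compare the two on `ℤ`, where `m̂ = δ₀` since the
`z₀`-marginal is Lebesgue measure, while `H = δ₀` since `𝓗ˢ(𝐂) = 1` and points are `𝓗ˢ`-null.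
The value `𝓗ˢ(𝐂) = 1` comes from the `2ⁿ` cylinders of diameter at most `3⁻ⁿ` (upper bound) and
from the Cantor function, which is `s`-Hölder with constant `1` and maps `𝐂` onto `[0, 1]`
(lower bound).
-/

open MeasureTheory Set
open scoped ENNReal Topology

noncomputable section

section CantorDimension

/-- The Hausdorff dimension `log₃ 2` of the middle-thirds Cantor set. -/
abbrev cantorDim : ℝ := Real.logb 3 2

lemma cantorDim_pos : 0 < cantorDim := Real.logb_pos (by norm_num) (by norm_num)

lemma cantorDim_le_one : cantorDim ≤ 1 := by
  rw [cantorDim, Real.logb_le_iff_le_rpow (by norm_num) (by norm_num)]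
  norm_num

lemma three_rpow_cantorDim : (3 : ℝ) ^ cantorDim = 2 :=
  Real.rpow_logb (by norm_num) (by norm_num) (by norm_num)

lemma three_mul_rpow_cantorDim {x : ℝ} (hx : 0 ≤ x) :
    (3 * x) ^ cantorDim = 2 * x ^ cantorDim := by
  rw [Real.mul_rpow (by norm_num) hx, three_rpow_cantorDim]

lemma inv_three_pow_rpow_cantorDim (n : ℕ) :
    (((3 : ℝ) ^ n)⁻¹) ^ cantorDim = ((2 : ℝ) ^ n)⁻¹ := by
  rw [Real.inv_rpow (by positivity), ← Real.rpow_natCast, ← Real.rpow_mul (by norm_num), mul_comm,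
    Real.rpow_mul (by norm_num), three_rpow_cantorDim, Real.rpow_natCast]

lemma rpow_cantorDim_add_le {u v : ℝ} (hu : u ∈ Icc (0 : ℝ) 1) (hv : v ∈ Icc (0 : ℝ) 1) :
    u ^ cantorDim + v ^ cantorDim ≤ (1 + u + v) ^ cantorDim := by
  have midpoint_concave : u ^ cantorDim + v ^ cantorDim ≤ 2 * ((u + v) / 2) ^ cantorDim := by
    have h := (Real.concaveOn_rpow cantorDim_pos.le cantorDim_le_one).2 hu.1 hv.1
      (by norm_num : (0 : ℝ) ≤ 1 / 2) (by norm_num : (0 : ℝ) ≤ 1 / 2) (by norm_num)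
    simp only [smul_eq_mul, ← mul_add] at h
    rw [one_div_mul_eq_div, one_div_mul_eq_div] at h
    linarith
  calc u ^ cantorDim + v ^ cantorDim ≤ 2 * ((u + v) / 2) ^ cantorDim := midpoint_concave
    _ = (3 * ((u + v) / 2)) ^ cantorDim :=
      (three_mul_rpow_cantorDim (by linarith [hu.1, hv.1])).symm
    _ ≤ (1 + u + v) ^ cantorDim :=
      Real.rpow_le_rpow (by linarith [hu.1, hv.1]) (by linarith [hu.2, hv.2]) cantorDim_pos.le

end CantorDimension

section CantorFunction

/-- Piecewise linear approximations of the Cantor function, extended by `0` to the left of `[0, 1]`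
and by `1` to its right. With this extension a single formula gives the recursion on all three
thirds of `[0, 1]`. -/
def cantorFunctionApprox : ℕ → ℝ → ℝ
  | 0, x => max 0 (min 1 x)
  | n + 1, x => (cantorFunctionApprox n (3 * x) + cantorFunctionApprox n (3 * x - 2)) / 2

lemma cantorFunctionApprox_of_nonpos (n : ℕ) {x : ℝ} (hx : x ≤ 0) :
    cantorFunctionApprox n x = 0 := by
  induction n generalizing x with
  | zero => simp [cantorFunctionApprox, hx]
  | succ n ih => simp [cantorFunctionApprox, ih (show 3 * x ≤ 0 by linarith),
      ih (show 3 * x - 2 ≤ 0 by linarith)]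

lemma cantorFunctionApprox_of_one_le (n : ℕ) {x : ℝ} (hx : 1 ≤ x) :
    cantorFunctionApprox n x = 1 := by
  induction n generalizing x with
  | zero => simp [cantorFunctionApprox, hx]
  | succ n ih => simp [cantorFunctionApprox, ih (show 1 ≤ 3 * x by linarith),
      ih (show 1 ≤ 3 * x - 2 by linarith)]

lemma cantorFunctionApprox_max_zero (n : ℕ) (x : ℝ) :
    cantorFunctionApprox n (max x 0) = cantorFunctionApprox n x := by
  rcases le_total x 0 with hx | hx
  · rw [max_eq_right hx, cantorFunctionApprox_of_nonpos n hx,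
      cantorFunctionApprox_of_nonpos n le_rfl]
  · rw [max_eq_left hx]

lemma cantorFunctionApprox_min_one (n : ℕ) (x : ℝ) :
    cantorFunctionApprox n (min x 1) = cantorFunctionApprox n x := by
  rcases le_total x 1 with hx | hx
  · rw [min_eq_left hx]
  · rw [min_eq_right hx, cantorFunctionApprox_of_one_le n hx,
      cantorFunctionApprox_of_one_le n le_rfl]

lemma monotone_cantorFunctionApprox (n : ℕ) : Monotone (cantorFunctionApprox n) := by
  induction n with
  | zero => exact fun x y hxy => max_le_max_left 0 (min_le_min_left 1 hxy)
  | succ n ih =>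
    intro x y hxy
    have left_le := ih (show 3 * x ≤ 3 * y by linarith)
    have right_le := ih (show 3 * x - 2 ≤ 3 * y - 2 by linarith)
    simp only [cantorFunctionApprox]
    linarith

lemma cantorFunctionApprox_zero_sub_le {x y : ℝ} (hxy : x ≤ y) :
    cantorFunctionApprox 0 y - cantorFunctionApprox 0 x ≤ (y - x) ^ cantorDim := by
  simp only [cantorFunctionApprox]
  rcases le_total (y - x) 1 with h | h
  · calc max 0 (min 1 y) - max 0 (min 1 x) ≤ y - x := by grind
      _ ≤ (y - x) ^ cantorDim :=
        Real.self_le_rpow_of_le_one (sub_nonneg.2 hxy) h cantorDim_le_one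
  · calc max 0 (min 1 y) - max 0 (min 1 x) ≤ 1 := by grind
      _ ≤ (y - x) ^ cantorDim := Real.one_le_rpow h cantorDim_pos.le

lemma cantorFunctionApprox_sub_le (n : ℕ) {x y : ℝ} (hxy : x ≤ y) :
    cantorFunctionApprox n y - cantorFunctionApprox n x ≤ (y - x) ^ cantorDim := by
  induction n generalizing x y with
  | zero => exact cantorFunctionApprox_zero_sub_le hxy
  | succ n ih =>
    have scale := three_mul_rpow_cantorDim (sub_nonneg.2 hxy)
    simp only [cantorFunctionApprox]
    rcases le_or_gt y (2 / 3) with hy | hy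
    · have := ih (show 3 * x ≤ 3 * y by linarith)
      rw [← mul_sub] at this
      rw [cantorFunctionApprox_of_nonpos n (show 3 * x - 2 ≤ 0 by linarith),
        cantorFunctionApprox_of_nonpos n (show 3 * y - 2 ≤ 0 by linarith)]
      linarith
    rcases le_or_gt (1 / 3) x with hx | hx
    · have := ih (show 3 * x - 2 ≤ 3 * y - 2 by linarith)
      rw [sub_sub_sub_cancel_right, ← mul_sub] at this
      rw [cantorFunctionApprox_of_one_le n (show 1 ≤ 3 * x by linarith),
        cantorFunctionApprox_of_one_le n (show 1 ≤ 3 * y by linarith)]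
      linarith
    -- `x` and `y` lie on opposite sides of the middle third, whose length is the `1` in
    -- `rpow_cantorDim_add_le` after scaling by `3`.
    · have hu : max (3 * x) 0 ≤ 1 := max_le (by linarith) zero_le_one
      have hv : 0 ≤ min (3 * y - 2) 1 := le_min (by linarith) zero_le_one
      have left_le := ih hu
      have right_le := ih hv
      rw [cantorFunctionApprox_max_zero, cantorFunctionApprox_of_one_le n le_rfl] at left_le
      rw [cantorFunctionApprox_min_one, cantorFunctionApprox_of_nonpos n le_rfl] at right_le
      rw [cantorFunctionApprox_of_one_le n (show 1 ≤ 3 * y by linarith),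
        cantorFunctionApprox_of_nonpos n (show 3 * x - 2 ≤ 0 by linarith)]
      have gap := rpow_cantorDim_add_le
        (u := 1 - max (3 * x) 0) (v := min (3 * y - 2) 1 - 0) (by grind) (by grind)
      have := Real.rpow_le_rpow (z := cantorDim) (by grind)
        (show 1 + (1 - max (3 * x) 0) + (min (3 * y - 2) 1 - 0) ≤ 3 * (y - x) by grind)
        cantorDim_pos.le
      linarith

lemma abs_cantorFunctionApprox_sub_le (n : ℕ) (x y : ℝ) :
    |cantorFunctionApprox n x - cantorFunctionApprox n y| ≤ |x - y| ^ cantorDim := by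
  wlog hxy : x ≤ y generalizing x y
  · rw [abs_sub_comm, abs_sub_comm x]
    exact this y x (le_of_not_ge hxy)
  rw [abs_sub_comm, abs_sub_comm x, abs_of_nonneg (sub_nonneg.2 hxy),
    abs_of_nonneg (sub_nonneg.2 (monotone_cantorFunctionApprox n hxy))]
  exact cantorFunctionApprox_sub_le n hxy

/-- The point of the Cantor set with ternary digits `2 * b i`. -/
def cantorPoint (b : ℕ → Bool) : ℝ := Real.ofDigits fun i => cond (b i) (2 : Fin 3) 0

/-- The point of `[0, 1]` with binary digits `b i`. -/
def binaryPoint (b : ℕ → Bool) : ℝ := Real.ofDigits fun i => cond (b i) (1 : Fin 2) 0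

lemma cantorPoint_eq_div_three (b : ℕ → Bool) :
    cantorPoint b = (cond (b 0) 2 0 + cantorPoint fun i => b (i + 1)) / 3 := by
  rw [cantorPoint, Real.ofDigits_eq_sum_add_ofDigits _ 1, cantorPoint]
  simp only [Finset.sum_range_one, Real.ofDigitsTerm]
  cases b 0 <;> simp <;> ring

lemma binaryPoint_eq_div_two (b : ℕ → Bool) :
    binaryPoint b = (cond (b 0) 1 0 + binaryPoint fun i => b (i + 1)) / 2 := by
  rw [binaryPoint, Real.ofDigits_eq_sum_add_ofDigits _ 1, binaryPoint]
  simp only [Finset.sum_range_one, Real.ofDigitsTerm]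
  cases b 0 <;> simp <;> ring

lemma cantorPoint_mem_Icc (b : ℕ → Bool) : cantorPoint b ∈ Icc (0 : ℝ) 1 :=
  ⟨Real.ofDigits_nonneg _, Real.ofDigits_le_one _⟩

lemma binaryPoint_mem_Icc (b : ℕ → Bool) : binaryPoint b ∈ Icc (0 : ℝ) 1 :=
  ⟨Real.ofDigits_nonneg _, Real.ofDigits_le_one _⟩

lemma range_cantorPoint : range cantorPoint = cantorSet := by
  have : cantorPoint = Subtype.val ∘ cantorSetEquivNatToBool.symm := rfl
  rw [this, range_comp, cantorSetEquivNatToBool.symm.range_eq_univ, image_univ, Subtype.range_coe]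

lemma Icc_subset_range_binaryPoint : Icc (0 : ℝ) 1 ⊆ range binaryPoint := by
  intro y hy
  obtain ⟨d, -, rfl⟩ := Real.ofDigits_SurjOn (b := 2) (by norm_num) hy
  refine ⟨fun i => decide (d i = 1), congrArg Real.ofDigits (funext fun i => ?_)⟩
  change cond (decide (d i = 1)) 1 0 = d i
  generalize d i = digit
  fin_cases digit <;> rfl

lemma abs_cantorFunctionApprox_cantorPoint_sub_le (n : ℕ) (b : ℕ → Bool) :
    |cantorFunctionApprox n (cantorPoint b) - binaryPoint b| ≤ (1 / 2) ^ n := by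
  induction n generalizing b with
  | zero =>
    have := cantorPoint_mem_Icc b
    have := binaryPoint_mem_Icc b
    simp only [cantorFunctionApprox, pow_zero]
    grind
  | succ n ih =>
    have ⟨tail_nonneg, tail_le_one⟩ := cantorPoint_mem_Icc fun i => b (i + 1)
    have step : cantorFunctionApprox (n + 1) (cantorPoint b) =
        (cond (b 0) 1 0 + cantorFunctionApprox n (cantorPoint fun i => b (i + 1))) / 2 := by
      rw [cantorPoint_eq_div_three, cantorFunctionApprox, mul_div_cancel₀ _ (by norm_num)]
      cases b 0
      · rw [cond_false, cond_false, zero_add, zero_add,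
          cantorFunctionApprox_of_nonpos n (show _ - 2 ≤ 0 by linarith), add_zero]
      · rw [cond_true, cond_true, add_sub_cancel_left,
          cantorFunctionApprox_of_one_le n (show 1 ≤ 2 + _ by linarith)]
    rw [step, binaryPoint_eq_div_two, ← sub_div, add_sub_add_left_eq_sub, abs_div, abs_two,
      pow_succ]
    linarith [ih fun i => b (i + 1)]

lemma tendsto_cantorFunctionApprox_cantorPoint (b : ℕ → Bool) :
    Filter.Tendsto (fun n => cantorFunctionApprox n (cantorPoint b)) Filter.atTop
      (𝓝 (binaryPoint b)) :=
  tendsto_iff_norm_sub_tendsto_zero.2 <|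
    squeeze_zero (fun _ => norm_nonneg _)
      (fun n => abs_cantorFunctionApprox_cantorPoint_sub_le n b)
      (tendsto_pow_atTop_nhds_zero_of_lt_one (by norm_num) (by norm_num))

lemma abs_binaryPoint_sub_le (b c : ℕ → Bool) :
    |binaryPoint b - binaryPoint c| ≤ |cantorPoint b - cantorPoint c| ^ cantorDim :=
  le_of_tendsto'
    ((tendsto_cantorFunctionApprox_cantorPoint b).sub
      (tendsto_cantorFunctionApprox_cantorPoint c)).abs
    fun n => abs_cantorFunctionApprox_sub_le n _ _

/-- The Cantor function on the Cantor set, reading ternary digits `0, 2` as binary digits `0, 1`.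
Its value `0` outside the Cantor set is never used. -/
def cantorSetToBinary : ℝ → ℝ := Function.extend cantorPoint binaryPoint 0

lemma cantorSetToBinary_cantorPoint (b : ℕ → Bool) :
    cantorSetToBinary (cantorPoint b) = binaryPoint b := by
  have factors : Function.FactorsThrough binaryPoint cantorPoint := fun b c hbc => by
    have h := abs_binaryPoint_sub_le b c
    rw [hbc, sub_self, abs_zero, Real.zero_rpow cantorDim_pos.ne'] at h
    exact sub_eq_zero.1 (abs_nonpos_iff.1 h)
  exact factors.extend_apply 0 b

lemma holderOnWith_cantorSetToBinary :
    HolderOnWith 1 cantorDim.toNNReal cantorSetToBinary cantorSet := by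
  rw [← range_cantorPoint]
  rintro _ ⟨b, rfl⟩ _ ⟨c, rfl⟩
  rw [cantorSetToBinary_cantorPoint, cantorSetToBinary_cantorPoint, ENNReal.coe_one, one_mul,
    edist_dist, edist_dist, Real.coe_toNNReal _ cantorDim_pos.le,
    ENNReal.ofReal_rpow_of_nonneg dist_nonneg cantorDim_pos.le]
  exact ENNReal.ofReal_le_ofReal (abs_binaryPoint_sub_le b c)

lemma Icc_subset_image_cantorSetToBinary : Icc (0 : ℝ) 1 ⊆ cantorSetToBinary '' cantorSet := by
  rw [← range_cantorPoint, ← range_comp]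
  convert Icc_subset_range_binaryPoint using 2
  exact funext cantorSetToBinary_cantorPoint

end CantorFunction

section HausdorffMeasureCantorSet

lemma one_le_hausdorffMeasure_cantorSet : 1 ≤ μH[cantorDim] cantorSet :=
  calc (1 : ℝ≥0∞) = μH[1] (Icc (0 : ℝ) 1) := by simp [hausdorffMeasure_real]
    _ ≤ μH[1] (cantorSetToBinary '' cantorSet) := measure_mono Icc_subset_image_cantorSetToBinary
    _ ≤ μH[cantorDim] cantorSet := by
      simpa [Real.coe_toNNReal _ cantorDim_pos.le] using
        holderOnWith_cantorSetToBinary.hausdorffMeasure_image_le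
          (Real.toNNReal_pos.2 cantorDim_pos) zero_le_one

/-- The points of the Cantor set whose first `n` ternary digits are `2 * w i`. -/
def cantorCylinder {n : ℕ} (w : Fin n → Bool) : Set ℝ := cantorPoint '' {b | ∀ i : Fin n, b i = w i}

lemma ediam_cantorCylinder_le {n : ℕ} (w : Fin n → Bool) :
    Metric.ediam (cantorCylinder w) ≤ ENNReal.ofReal ((3 : ℝ) ^ n)⁻¹ := by
  refine Metric.ediam_le ?_
  rintro _ ⟨b, hb, rfl⟩ _ ⟨c, hc, rfl⟩
  rw [edist_dist, Real.dist_eq]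
  refine ENNReal.ofReal_le_ofReal ?_
  have := Real.abs_ofDigits_sub_ofDigits_le (n := n)
    (x := fun i => cond (b i) (2 : Fin 3) 0) (y := fun i => cond (c i) (2 : Fin 3) 0)
    fun i hi => by rw [hb ⟨i, hi⟩, hc ⟨i, hi⟩]
  exact_mod_cast this

lemma cantorSet_subset_iUnion_cantorCylinder (n : ℕ) :
    cantorSet ⊆ ⋃ w : Fin n → Bool, cantorCylinder w := by
  rw [← range_cantorPoint]
  rintro _ ⟨b, rfl⟩
  exact mem_iUnion.2 ⟨fun i => b i, b, fun _ => rfl, rfl⟩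

lemma sum_ediam_cantorCylinder_rpow_le (n : ℕ) :
    ∑ w : Fin n → Bool, Metric.ediam (cantorCylinder w) ^ cantorDim ≤ 1 :=
  calc ∑ w : Fin n → Bool, Metric.ediam (cantorCylinder w) ^ cantorDim
      ≤ ∑ _w : Fin n → Bool, ENNReal.ofReal ((3 : ℝ) ^ n)⁻¹ ^ cantorDim :=
        Finset.sum_le_sum fun w _ =>
          ENNReal.rpow_le_rpow (ediam_cantorCylinder_le w) cantorDim_pos.le
    _ = 2 ^ n * (2 ^ n)⁻¹ := by
      rw [ENNReal.ofReal_rpow_of_nonneg (by positivity) cantorDim_pos.le,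
        inv_three_pow_rpow_cantorDim, ENNReal.ofReal_inv_of_pos (by positivity)]
      simp
    _ = 1 := ENNReal.mul_inv_cancel (by simp) (by simp)

lemma hausdorffMeasure_cantorSet_le_one : μH[cantorDim] cantorSet ≤ 1 := by
  have diam_bound_tendsto :
      Filter.Tendsto (fun n : ℕ => ENNReal.ofReal ((3 : ℝ) ^ n)⁻¹) Filter.atTop (𝓝 0) := by
    rw [← ENNReal.ofReal_zero]
    exact ENNReal.tendsto_ofReal
      (tendsto_inv_atTop_zero.comp (tendsto_pow_atTop_atTop_of_one_lt (by norm_num)))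
  refine (Measure.hausdorffMeasure_le_liminf_sum cantorDim cantorSet _ diam_bound_tendsto
    (fun _ => cantorCylinder) (.of_forall fun _ => ediam_cantorCylinder_le)
    (.of_forall cantorSet_subset_iUnion_cantorCylinder)).trans ?_
  exact Filter.liminf_le_of_le (by isBoundedDefault)
    fun _ h => h.exists.choose_spec.trans (sum_ediam_cantorCylinder_rpow_le _)

theorem hausdorffMeasure_cantorSet : μH[cantorDim] cantorSet = 1 :=
  le_antisymm hausdorffMeasure_cantorSet_le_one one_le_hausdorffMeasure_cantorSet

end HausdorffMeasureCantorSet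

section CantorOverlap

/-- The two contractions `y ↦ y / 3` and `y ↦ (2 + y) / 3` generating the Cantor set. -/
def cantorBranch (d : Bool) (y : ℝ) : ℝ := (cond d 2 0 + y) / 3

lemma continuous_cantorBranch (d : Bool) : Continuous (cantorBranch d) := by
  unfold cantorBranch
  fun_prop

lemma injective_cantorBranch (d : Bool) : Function.Injective (cantorBranch d) := fun y z h => by
  simp only [cantorBranch] at h
  linarith

lemma cantorSet_eq_iUnion_cantorBranch : cantorSet = ⋃ d, cantorBranch d '' cantorSet := by
  conv_lhs => rw [cantorSet_eq_union_halves, union_comm, union_eq_iUnion]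
  refine iUnion_congr fun d => ?_
  cases d <;> exact image_congr fun y _ => by simp [cantorBranch]

lemma pairwise_disjoint_cantorBranch :
    Pairwise (Function.onFun Disjoint fun d => cantorBranch d '' cantorSet) := by
  intro d e hde
  refine disjoint_left.2 ?_
  rintro _ ⟨y, hy, rfl⟩ ⟨z, hz, hyz⟩
  have hy := cantorSet_subset_unitInterval hy
  have hz := cantorSet_subset_unitInterval hz
  simp only [cantorBranch] at hyz
  cases d <;> cases e <;> grind

lemma hausdorffMeasure_image_cantorBranch (d : Bool) (A : Set ℝ) :
    μH[cantorDim] (cantorBranch d '' A) = 2⁻¹ * μH[cantorDim] A := by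
  have branch_eq_homothety :
      cantorBranch d = AffineMap.homothety (cond d 1 0 : ℝ) ((3 : ℝ)⁻¹) := by
    funext y
    cases d <;> simp [cantorBranch, AffineMap.homothety_apply] <;> ring
  rw [branch_eq_homothety, hausdorffMeasure_homothety_image cantorDim_pos.le _ (by norm_num)]
  have ratio : ‖(3 : ℝ)⁻¹‖₊ ^ cantorDim = 2⁻¹ := by
    ext
    simpa using inv_three_pow_rpow_cantorDim 1
  rw [ratio, ENNReal.smul_def, smul_eq_mul, ENNReal.coe_inv two_ne_zero, ENNReal.coe_ofNat]

/-- The intersection `(𝐂 + t) ∩ 𝐂` of the Cantor set with its translate by `t`. -/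
def cantorOverlap (t : ℝ) : Set ℝ := (fun x : ℝ => x + t) '' cantorSet ∩ cantorSet

lemma cantorOverlap_zero : cantorOverlap 0 = cantorSet := by simp [cantorOverlap]

lemma isCompact_cantorOverlap (t : ℝ) : IsCompact (cantorOverlap t) :=
  (isCompact_cantorSet.image (by fun_prop)).inter isCompact_cantorSet

lemma hausdorffMeasure_cantorOverlap_ne_top (t : ℝ) : μH[cantorDim] (cantorOverlap t) ≠ ∞ :=
  measure_ne_top_of_subset inter_subset_right (by simp [hausdorffMeasure_cantorSet])

lemma cantorOverlap_subset_pair {t : ℝ} (ht : 1 ≤ |t|) : cantorOverlap t ⊆ {0, 1} := by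
  rintro _ ⟨⟨y, hy, rfl⟩, hyt⟩
  have hy := cantorSet_subset_unitInterval hy
  have hyt := cantorSet_subset_unitInterval hyt
  grind

lemma hausdorffMeasure_cantorOverlap_of_one_le_abs {t : ℝ} (ht : 1 ≤ |t|) :
    μH[cantorDim] (cantorOverlap t) = 0 := by
  have := Measure.nullSingletonClass_hausdorff ℝ cantorDim_pos
  exact measure_mono_null (cantorOverlap_subset_pair ht) ((toFinite {0, 1}).measure_zero _)

lemma image_cantorBranch_cantorOverlap (t : ℝ) (a b : Bool) :
    cantorBranch b '' cantorOverlap (3 * t + cond a 2 0 - cond b 2 0) =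
      (fun x => x + t) '' (cantorBranch a '' cantorSet) ∩ cantorBranch b '' cantorSet := by
  rw [cantorOverlap, image_inter (injective_cantorBranch b), image_image, image_image]
  congr 2
  funext y
  simp only [cantorBranch]
  ring

lemma cantorOverlap_eq_iUnion (t : ℝ) :
    cantorOverlap t = ⋃ p : Bool × Bool,
      cantorBranch p.2 '' cantorOverlap (3 * t + cond p.1 2 0 - cond p.2 2 0) := by
  simp only [image_cantorBranch_cantorOverlap]
  rw [iUnion_prod', cantorOverlap]
  conv_lhs => rw [cantorSet_eq_iUnion_cantorBranch, image_iUnion, iUnion_inter_iUnion]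

lemma pairwise_disjoint_image_cantorBranch_cantorOverlap (t : ℝ) :
    Pairwise (Function.onFun Disjoint fun p : Bool × Bool =>
      cantorBranch p.2 '' cantorOverlap (3 * t + cond p.1 2 0 - cond p.2 2 0)) := by
  rintro ⟨a, b⟩ ⟨a', b'⟩ hne
  simp only [Function.onFun, image_cantorBranch_cantorOverlap]
  by_cases ha : a = a'
  · have hb : b ≠ b' := fun hb => hne (Prod.ext ha hb)
    exact (pairwise_disjoint_cantorBranch hb).mono inter_subset_right inter_subset_right
  · exact ((disjoint_image_iff (add_left_injective t)).2 (pairwise_disjoint_cantorBranch ha)).mono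
      inter_subset_left inter_subset_left

theorem hausdorffMeasure_cantorOverlap_refinement (t : ℝ) :
    μH[cantorDim].real (cantorOverlap t) = μH[cantorDim].real (cantorOverlap (3 * t)) +
      1 / 2 * (μH[cantorDim].real (cantorOverlap (3 * t + 2)) +
        μH[cantorDim].real (cantorOverlap (3 * t - 2))) := by
  have piece_ne_top (p : Bool × Bool) : μH[cantorDim]
      (cantorBranch p.2 '' cantorOverlap (3 * t + cond p.1 2 0 - cond p.2 2 0)) ≠ ∞ := by
    rw [hausdorffMeasure_image_cantorBranch]
    exact ENNReal.mul_ne_top (by simp) (hausdorffMeasure_cantorOverlap_ne_top _)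
  rw [cantorOverlap_eq_iUnion t, measureReal_iUnion_fintype
    (pairwise_disjoint_image_cantorBranch_cantorOverlap t)
    (fun p => ((isCompact_cantorOverlap _).image (continuous_cantorBranch _)).measurableSet)
    piece_ne_top]
  simp only [measureReal_def, hausdorffMeasure_image_cantorBranch, ENNReal.toReal_mul,
    Fintype.sum_prod_type, Fintype.sum_bool, cond_true, cond_false, add_zero, sub_zero,
    add_sub_cancel_right, ENNReal.toReal_inv, ENNReal.toReal_ofNat]
  ring

end CantorOverlap

namespace Solenoid

variable {N : ℕ} {m : Measure (Solenoid N)}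

/-- The Fourier coefficient `m̂(l / N ^ p)` of a measure on the solenoid. The character attached to
`l / N ^ p` is `z ↦ z_p ^ l`. -/
def fourierCoeff (m : Measure (Solenoid N)) (p : ℕ) (l : ℤ) : ℂ :=
  ∫ z : Solenoid N, ((z.val p : Circle) : ℂ) ^ l ∂m

lemma measurable_coord (n : ℤ) : Measurable fun z : Solenoid N => z.val n :=
  (measurable_pi_apply n).comp measurable_subtype_coe

lemma measurable_shiftInv : Measurable (shiftInv N) :=
  (measurable_pi_lambda _ fun n => measurable_coord (n + 1)).subtype_mk

lemma continuous_coe_zpow (l : ℤ) : Continuous fun w : Circle => (w : ℂ) ^ l := by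
  simp only [← Circle.coe_zpow]
  exact (show Continuous fun w : Circle => (w : ℂ) by fun_prop).comp (continuous_zpow l)

lemma measurable_coord_zpow (n l : ℤ) :
    Measurable fun z : Solenoid N => ((z.val n : Circle) : ℂ) ^ l :=
  (continuous_coe_zpow l).measurable.comp (measurable_coord n)

lemma integrable_coord_zpow [IsFiniteMeasure m] (n l : ℤ) :
    Integrable (fun z : Solenoid N => ((z.val n : Circle) : ℂ) ^ l) m :=
  .of_bound (measurable_coord_zpow n l).aestronglyMeasurable 1 <|
    .of_forall fun z => by rw [norm_zpow, Circle.norm_coe, one_zpow]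

lemma coord_pow (z : Solenoid N) (p : ℕ) : z.val p ^ N ^ p = z.val 0 := by
  induction p with
  | zero => simp
  | succ p ih =>
    rw [pow_succ', pow_mul, ← ih, ← z.property p]
    push_cast
    rfl

lemma coord_zero_zpow (z : Solenoid N) (p : ℕ) (k : ℤ) :
    ((z.val 0 : Circle) : ℂ) ^ k = ((z.val p : Circle) : ℂ) ^ (k * (N : ℤ) ^ p) := by
  rw [← coord_pow z p, Circle.coe_pow, mul_comm, zpow_mul]
  norm_cast

lemma integral_circleMeasure_zpow (l : ℤ) :
    ∫ w, (w : ℂ) ^ l ∂circleMeasure = if l = 0 then 1 else 0 := by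
  have continuous_ee : Continuous ee := by unfold ee; fun_prop
  have ee_zpow (x : ℝ) :
      (ee x : ℂ) ^ l = Complex.exp (-(2 * Real.pi * l * Complex.I) * x) := by
    rw [ee, Circle.coe_exp, ← Complex.exp_int_mul]
    congr 1
    push_cast
    ring
  rw [circleMeasure, integral_map continuous_ee.measurable.aemeasurable
    (continuous_coe_zpow l).measurable.aestronglyMeasurable, integral_Ico_eq_integral_Ioc,
    ← intervalIntegral.integral_of_le zero_le_one]
  simp only [ee_zpow]
  split_ifs with hl
  · simp [hl]
  · have frequency_ne_zero : (-(2 * Real.pi * l * Complex.I) : ℂ) ≠ 0 := by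
      simp [hl, Real.pi_ne_zero]
    have period : Complex.exp (-(2 * Real.pi * l * Complex.I) * (1 : ℝ)) = 1 :=
      Complex.exp_eq_one_iff.2 ⟨-l, by push_cast; ring⟩
    rw [integral_exp_mul_complex frequency_ne_zero, period]
    simp

lemma fourierCoeff_zero (hm : m.map (fun z : Solenoid N => z.val 0) = circleMeasure) (l : ℤ) :
    fourierCoeff m 0 l = if l = 0 then 1 else 0 := by
  rw [← integral_circleMeasure_zpow, ← hm, integral_map (measurable_coord 0).aemeasurable
    (continuous_coe_zpow l).measurable.aestronglyMeasurable]
  rfl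

lemma integral_comp_shiftInv {W : Circle → ℝ} (hm : IsAssociatedMeasure N W m)
    (hW : Measurable W) (hW_nonneg : ∀ w, 0 ≤ W w) {E : Type*} [NormedAddCommGroup E]
    [NormedSpace ℝ E] {f : Solenoid N → E} (hf : StronglyMeasurable f) :
    ∫ z, f (shiftInv N z) ∂m = ∫ z, (N * W (z.val 0)) • f z ∂m := by
  have measurable_density :
      Measurable fun z : Solenoid N => ENNReal.ofReal (N * W (z.val 0)) :=
    ((hW.comp (measurable_coord 0)).const_mul _).ennreal_ofReal
  rw [← integral_map measurable_shiftInv.aemeasurable hf.aestronglyMeasurable]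
  change ∫ z, f z ∂(measShift N m) = _
  rw [hm.2.2, integral_withDensity_eq_integral_toReal_smul measurable_density
    (.of_forall fun _ => ENNReal.ofReal_lt_top)]
  simp only [ENNReal.toReal_ofReal (mul_nonneg (Nat.cast_nonneg N) (hW_nonneg _))]

lemma sq_norm_one_add_div_sqrt_two (w : Circle) :
    ((‖(1 + (w : ℂ)) / Real.sqrt 2‖ ^ 2 : ℝ) : ℂ) = 1 + 1 / 2 * ((w : ℂ) + (w : ℂ)⁻¹) := by
  have hw : (w : ℂ) ≠ 0 := Circle.coe_ne_zero w
  rw [norm_div, div_pow, Complex.norm_real, Real.norm_of_nonneg (Real.sqrt_nonneg _),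
    Real.sq_sqrt (by norm_num)]
  push_cast
  rw [← Complex.mul_conj', map_add, map_one, ← Circle.coe_inv_eq_conj, Circle.coe_inv]
  field_simp
  ring

lemma fourierCoeff_succ [NeZero N] {k : ℕ}
    (hm : IsAssociatedMeasure N (fun z => ‖(1 + (z : ℂ) ^ k) / Real.sqrt 2‖ ^ 2 / N) m)
    (p : ℕ) (l : ℤ) :
    fourierCoeff m (p + 1) l = fourierCoeff m p l +
      1 / 2 * (fourierCoeff m p (l + k * N ^ p) + fourierCoeff m p (l - k * N ^ p)) := by
  have := hm.1
  have weight_smul_coord (z : Solenoid N) :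
      (N * (‖(1 + ((z.val 0 : Circle) : ℂ) ^ k) / Real.sqrt 2‖ ^ 2 / N)) •
          ((z.val p : Circle) : ℂ) ^ l =
        ((z.val p : Circle) : ℂ) ^ l + 1 / 2 * (((z.val p : Circle) : ℂ) ^ (l + k * N ^ p) +
          ((z.val p : Circle) : ℂ) ^ (l - k * N ^ p)) := by
    have hz : ((z.val p : Circle) : ℂ) ≠ 0 := Circle.coe_ne_zero _
    rw [mul_div_cancel₀ _ (NeZero.ne (N : ℝ)), Complex.real_smul, ← Circle.coe_pow,
      sq_norm_one_add_div_sqrt_two, Circle.coe_pow, ← zpow_natCast, coord_zero_zpow z p,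
      zpow_add₀ hz, zpow_sub₀ hz]
    ring
  calc fourierCoeff m (p + 1) l = ∫ z, ((shiftInv N z).val p : ℂ) ^ l ∂m := rfl
    _ = ∫ z : Solenoid N, (((z.val p : Circle) : ℂ) ^ l +
          1 / 2 * (((z.val p : Circle) : ℂ) ^ (l + k * N ^ p) +
            ((z.val p : Circle) : ℂ) ^ (l - k * N ^ p))) ∂m := by
      rw [integral_comp_shiftInv hm (by fun_prop) (fun _ => by positivity)
        (measurable_coord_zpow p l).stronglyMeasurable]
      simp only [weight_smul_coord]
    _ = _ := by
      have integrable_average : Integrable (fun z : Solenoid N =>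
          (1 / 2 : ℂ) * (((z.val p : Circle) : ℂ) ^ (l + k * N ^ p) +
            ((z.val p : Circle) : ℂ) ^ (l - k * N ^ p))) m :=
        ((integrable_coord_zpow _ _).add (integrable_coord_zpow _ _)).const_mul _
      rw [integral_add (integrable_coord_zpow _ _) integrable_average,
        integral_const_mul, integral_add (integrable_coord_zpow _ _) (integrable_coord_zpow _ _)]
      rfl

theorem fourierCoeff_eq_hausdorffMeasure_cantorOverlap {m : Measure (Solenoid 3)}
    (hm : IsAssociatedMeasure 3 (fun z => ‖(1 + (z : ℂ) ^ 2) / Real.sqrt 2‖ ^ 2 / 3) m)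
    (p : ℕ) (l : ℤ) :
    fourierCoeff m p l = μH[cantorDim].real (cantorOverlap (l / 3 ^ p)) := by
  induction p generalizing l with
  | zero =>
    rw [fourierCoeff_zero hm.2.1, pow_zero, div_one, measureReal_def]
    split_ifs with hl
    · simp [hl, cantorOverlap_zero, hausdorffMeasure_cantorSet]
    · rw [hausdorffMeasure_cantorOverlap_of_one_le_abs (by exact_mod_cast Int.one_le_abs hl)]
      simp
  | succ p ih =>
    have h_mul : 3 * ((l : ℝ) / 3 ^ (p + 1)) = l / 3 ^ p := by rw [pow_succ]; field_simp
    have h_add : ((l + 2 * 3 ^ p : ℤ) : ℝ) / 3 ^ p = l / 3 ^ p + 2 := by push_cast; field_simp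
    have h_sub : ((l - 2 * 3 ^ p : ℤ) : ℝ) / 3 ^ p = l / 3 ^ p - 2 := by push_cast; field_simp
    have h_succ := fourierCoeff_succ (k := 2) (by exact_mod_cast hm) p l
    push_cast at h_succ
    rw [h_succ, ih, ih, ih, hausdorffMeasure_cantorOverlap_refinement ((l : ℝ) / 3 ^ (p + 1)),
      h_mul, h_add, h_sub]
    push_cast
    ring

end Solenoid

end

open MeasureTheory Real Complex Filter Finset in
/-- Lemma 4.2.2. Let `N = 3`, `m₀(z) = (1+z²)/√2`,
`W = |m₀|²/3` and `m` the associated measure on `S₃`.  Then for every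
`λ = l/3^p ∈ ℤ[1/3]`,
`m̂(λ) = 𝓗^s((𝐂+λ) ∩ 𝐂)` where `𝐂` is the middle-thirds Cantor set (Mathlib's `cantorSet`),
`s = log₃ 2` and `𝓗^s` is the `s`-dimensional Hausdorff measure; in particular
`m̂(λ) = 0` whenever `|λ| ≥ 1`. -/
theorem statement_18
    (m : Measure (Solenoid 3))
    (hm : IsAssociatedMeasure 3
      (fun z => ‖(1 + ((z : ℂ)) ^ 2) / Real.sqrt 2‖ ^ 2 / 3) m) :
    (∀ (l : ℤ) (p : ℕ),
      ∫ z : Solenoid 3, ((z.val p : Circle) : ℂ) ^ l ∂m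
        = (((μH[Real.logb 3 2]
              ((fun x : ℝ => x + (l : ℝ) / 3 ^ p) '' cantorSet ∩ cantorSet)).toReal : ℝ) : ℂ)) ∧
    (∀ (l : ℤ) (p : ℕ), 1 ≤ |(l : ℝ) / 3 ^ p| →
      ∫ z : Solenoid 3, ((z.val p : Circle) : ℂ) ^ l ∂m = 0) := by
  have transform_eq := fun (l : ℤ) (p : ℕ) =>
    Solenoid.fourierCoeff_eq_hausdorffMeasure_cantorOverlap hm p l
  refine ⟨transform_eq, fun l p hlp => (transform_eq l p).trans ?_⟩
  rw [measureReal_def, hausdorffMeasure_cantorOverlap_of_one_le_abs hlp]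
  simp
end
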